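/- Let k be an algebraically closed field of characteristic different from 2 and t ≥ 2. Then the monomorphism category S(mod k[X]/(X^t)) is of finite representation type if and only if t ≤ 5. (This is the case n = 1 of the paper's Corollary 7.8 on the connected self-injective Nakayama algebras Λ(n,t) = kC_n/J^t, since Λ(1,t) ≅ k[X]/(X^t).) -/

import Mathlib

open CategoryTheory CategoryTheory.Limits

/-- The componentwise direct sum of two objects of the morphism category. -/
noncomputable def arrowBiprod {C : Type*} [Category C] [Preadditive C]
    [HasBinaryBiproducts C] (f g : Arrow C) : Arrow C :=
  Arrow.mk (biprod.map f.hom g.hom)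

/-- Indecomposability of an object of the subcategory of the morphism category given by
the predicate `P`. -/
noncomputable def IndecArrowIn {C : Type*} [Category C] [Preadditive C]
    [HasBinaryBiproducts C] (P : Arrow C → Prop) (X : Arrow C) : Prop :=
  ¬ IsZero X ∧ ∀ Y Z : Arrow C, P Y → P Z →
    Nonempty (X ≅ arrowBiprod Y Z) → IsZero Y ∨ IsZero Z

/-- The subcategory given by `P` has finite representation type. -/
noncomputable def FRTArrow {C : Type*} [Category C] [Preadditive C]
    [HasBinaryBiproducts C] (P : Arrow C → Prop) : Prop :=
  ∃ s : Set (Arrow C), s.Finite ∧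
    ∀ X, P X → IndecArrowIn P X → ∃ Y ∈ s, Nonempty (X ≅ Y)

/-- Objects of the monomorphism category `S(mod Λ)`: injective homomorphisms between
finitely generated (equivalently, finite dimensional) `Λ`-modules. -/
def SModObj' (Λ : Type) [CommRing Λ] (X : Arrow (ModuleCat Λ)) : Prop :=
  Module.Finite Λ X.left ∧ Module.Finite Λ X.right ∧ Mono X.hom

namespace SN
universe v
variable {k : Type} [Field k]

section frob
variable {V W : Type v} [AddCommGroup V] [Module k V] [AddCommGroup W] [Module k W]

/-- The Frobenius map attached to a functional and a vector. -/
noncomputable def frob (l : V →ₗ[k] k) (T : V →ₗ[k] V) (T' : W →ₗ[k] W) (n : ℕ) (x : W) : V →ₗ[k] W :=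
  ∑ a ∈ Finset.range n, (l ∘ₗ (T ^ (n - 1 - a))).smulRight ((T' ^ a) x)

theorem frob_apply (l : V →ₗ[k] k) (T : V →ₗ[k] V) (T' : W →ₗ[k] W) (n : ℕ) (x : W) (u : V) :
    frob l T T' n x u = ∑ a ∈ Finset.range n, l ((T ^ (n - 1 - a)) u) • (T' ^ a) x := by
  simp [frob]

theorem pow_comm_apply (T : V →ₗ[k] V) (n : ℕ) (u : V) : (T ^ n) (T u) = T ((T ^ n) u) := by
  rw [← Module.End.mul_apply, ← Module.End.mul_apply, ← pow_succ, ← pow_succ']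

theorem pow_succ_apply (T : V →ₗ[k] V) (n : ℕ) (u : V) : (T ^ (n+1)) u = T ((T ^ n) u) := by
  rw [← Module.End.mul_apply, ← pow_succ']

theorem pow_add_apply (T : V →ₗ[k] V) (m n : ℕ) (u : V) : (T ^ (m+n)) u = (T ^ m) ((T ^ n) u) := by
  rw [← Module.End.mul_apply, ← pow_add]

theorem frob_comm (l : V →ₗ[k] k) (T : V →ₗ[k] V) (T' : W →ₗ[k] W) (n : ℕ) (x : W)
    (hl : ∀ u, l ((T ^ n) u) = 0) (hx : (T' ^ n) x = 0) (u : V) :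
    frob l T T' n x (T u) = T' (frob l T T' n x u) := by
  rw [frob_apply, frob_apply, map_sum]
  rcases n with _ | n
  · simp
  rw [Finset.sum_range_succ', Finset.sum_range_succ]
  simp only [map_smul, ← pow_succ_apply]
  rw [hx]
  simp only [pow_comm_apply, ← pow_succ_apply]
  have : n + 1 - 1 - 0 + 1 = n + 1 := by omega
  rw [this, hl]
  simp only [zero_smul, add_zero, smul_zero]
  refine Finset.sum_congr rfl fun a ha => ?_
  have : n + 1 - 1 - (a + 1) + 1 = n + 1 - 1 - a := by
    have := Finset.mem_range.1 ha; omega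
  rw [this]

theorem nil_indep (T : V →ₗ[k] V) (n : ℕ) (x : V) (h0 : (T ^ n) x = 0) (h1 : (T ^ (n-1)) x ≠ 0) :
    LinearIndependent k (fun i : Fin n => (T ^ (i:ℕ)) x) := by
  rw [Fintype.linearIndependent_iff]
  intro g hg
  have key : ∀ m : ℕ, ∀ i : Fin n, (i:ℕ) = m → g i = 0 := by
    intro m
    induction m using Nat.strong_induction_on with
    | _ m ih =>
      intro i hi
      have h2 := congrArg (T ^ (n - 1 - m)) hg
      rw [map_sum, map_zero, Finset.sum_eq_single i] at h2
      · rw [map_smul, ← pow_add_apply] at h2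
        have : n - 1 - m + (i:ℕ) = n - 1 := by have := i.2; omega
        rw [this] at h2
        exact (smul_eq_zero.1 h2).resolve_right h1
      · intro j _ hj
        rcases lt_or_ge (j:ℕ) m with h | h
        · rw [ih j h j rfl]; simp
        · have h3 : m < j := lt_of_le_of_ne h (fun h => hj (Fin.ext (by omega)))
          rw [map_smul, ← pow_add_apply]
          have : n - 1 - m + (j:ℕ) = ((j:ℕ) - 1 - m) + n := by have := j.2; omega
          rw [this, pow_add_apply, h0]; simp
      · simp
  exact fun i => key i i rfl

theorem nil_dual (T : V →ₗ[k] V) (n : ℕ) (x : V) (h0 : (T ^ n) x = 0) (h1 : (T ^ (n-1)) x ≠ 0) :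
    ∃ l : V →ₗ[k] k, ∀ j < n, l ((T ^ j) x) = if j = n - 1 then 1 else 0 := by
  have hli := nil_indep T n x h0 h1
  let b := Module.Basis.extend hli.linearIndepOn_id
  obtain ⟨l, hl⟩ : ∃ l : V →ₗ[k] k, ∀ i : Fin n, l ((T ^ (i:ℕ)) x) = if (i:ℕ) = n - 1 then 1 else 0 := by
    let c := Module.Basis.span hli
    obtain ⟨l, hl⟩ := LinearMap.exists_extend (c.constr k (fun i : Fin n => if (i:ℕ) = n - 1 then (1:k) else 0))
    refine ⟨l, fun i => ?_⟩
    have h := congrArg (fun f => f (c i)) hl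
    simp only [Module.Basis.constr_basis, LinearMap.comp_apply] at h
    rw [← h]
    congr 1
    simp [c, Module.Basis.span_apply]
  exact ⟨l, fun j hj => hl ⟨j, hj⟩⟩

theorem frob_self (T : V →ₗ[k] V) (T' : W →ₗ[k] W) (n : ℕ) (hn : 0 < n) (x : V) (l : V →ₗ[k] k)
    (hl : ∀ j < n, l ((T ^ j) x) = if j = n - 1 then 1 else 0) (x' : W) :
    frob l T T' n x' x = x' := by
  rw [frob_apply, Finset.sum_eq_single 0]
  · rw [hl _ (by omega)]; simp
  · intro b hb hb0
    have := Finset.mem_range.1 hb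
    rw [hl _ (by omega), if_neg (by omega), zero_smul]
  · intro h; simp at h; omega
end frob

/-- Jordan generators of a nilpotent operator. -/
theorem jordan (d : ℕ) : ∀ (V : Type v) [AddCommGroup V] [Module k V] [FiniteDimensional k V]
    (T : V →ₗ[k] V), IsNilpotent T → Module.finrank k V = d →
    ∃ (ι : Type) (w : ι → V) (n : ι → ℕ), (∀ j, (T ^ n j) (w j) = 0) ∧
      (∀ i u, (T ^ i) u = 0 →
        u ∈ Submodule.span k {y | ∃ j a, y = (T ^ a) (w j) ∧ a < n j ∧ n j ≤ a + i}) ∧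
      (∀ (W : Type v) [AddCommGroup W] [Module k W] (T' : W →ₗ[k] W) (w' : ι → W),
        (∀ j, (T' ^ n j) (w' j) = 0) →
        ∃ f : V →ₗ[k] W, (∀ u, f (T u) = T' (f u)) ∧ ∀ j, f (w j) = w' j) := by
  induction d using Nat.strong_induction_on with
  | _ d ih =>
  intro V _ _ _ T hT hd
  by_cases hV : Subsingleton V
  · refine ⟨Empty, Empty.elim, Empty.elim, fun j => j.elim, fun i u _ => ?_, fun W _ _ T' w' _ =>
      ⟨0, by simp, fun j => j.elim⟩⟩
    rw [Subsingleton.elim u 0]; exact Submodule.zero_mem _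
  · have hV' : Nontrivial V := not_subsingleton_iff_nontrivial.1 hV
    classical
    set r := nilpotencyClass T with hr
    have hr0 : 0 < r := pos_nilpotencyClass_iff.2 hT
    have hTr : T ^ r = 0 := pow_nilpotencyClass hT
    have hTr1 : T ^ (r - 1) ≠ 0 := pow_pred_nilpotencyClass hT
    obtain ⟨x, hx⟩ : ∃ x, (T ^ (r-1)) x ≠ 0 := by
      by_contra h; push Not at h; exact hTr1 (LinearMap.ext h)
    have hTx : ∀ u, (T ^ r) u = 0 := fun u => by rw [hTr]; rfl
    obtain ⟨l, hl⟩ := nil_dual T r x (hTx x) hx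
    set P := frob l T T r x with hP
    have hPc : ∀ u, P (T u) = T (P u) := frob_comm l T T r x (fun u => by rw [hTx]; simp) (hTx x)
    have hPx : P x = x := frob_self T T r hr0 x l hl x
    have hPcp : ∀ i u, P ((T^i) u) = (T^i) (P u) := by
      intro i; induction i with
      | zero => simp
      | succ i ih => intro u; rw [pow_succ_apply, hPc, ih, pow_succ_apply]
    have hPP : ∀ u, P (P u) = P u := by
      intro u
      conv_lhs => rw [hP, frob_apply l T T r x u, map_sum]
      rw [hP, frob_apply l T T r x u]
      refine Finset.sum_congr rfl fun a _ => ?_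
      rw [map_smul, ← hP, hPcp, hPx]
    let C := LinearMap.ker P
    have hTC : ∀ c ∈ C, T c ∈ C := by
      intro c hc
      rw [LinearMap.mem_ker] at *
      rw [hPc, hc, map_zero]
    let TC : C →ₗ[k] C := T.restrict hTC
    have hTCp : ∀ i (c : C), (((TC ^ i) c : C) : V) = (T ^ i) c := by
      intro i; induction i with
      | zero => simp
      | succ i ih => intro c; rw [pow_succ_apply, pow_succ_apply, ← ih]; rfl
    have hnil : IsNilpotent TC := ⟨r, by ext c; rw [hTCp, hTx]; rfl⟩
    have hlt : Module.finrank k C < d := by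
      rw [← hd]
      apply Submodule.finrank_lt
      intro h
      have : x ∈ C := by rw [h]; trivial
      rw [LinearMap.mem_ker, hPx] at this
      rw [this] at hx; simp at hx
    obtain ⟨ι, w, n, h1, h2, h3⟩ := ih _ hlt C TC hnil rfl
    refine ⟨Option ι, fun j => j.elim x (fun j => w j), fun j => j.elim r n, ?_, ?_, ?_⟩
    · rintro (_ | j)
      · exact hTx x
      · change (T ^ n j) (w j) = 0
        rw [← hTCp, h1]; rfl
    · intro i u hu
      have hu' : u = P u + (u - P u) := by abel
      rw [hu']
      refine Submodule.add_mem _ ?_ ?_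
      · rw [hP, frob_apply]
        refine Submodule.sum_mem _ fun a ha => ?_
        have ha := Finset.mem_range.1 ha
        by_cases hai : r ≤ a + i
        · exact Submodule.smul_mem _ _ (Submodule.subset_span ⟨none, a, rfl, ha, hai⟩)
        · have : r - 1 - a = (r - 1 - a - i) + i := by omega
          rw [this, pow_add_apply, hu]; simp
      · have hm : u - P u ∈ C := by rw [LinearMap.mem_ker, map_sub, hPP, sub_self]
        have := h2 i ⟨u - P u, hm⟩ (by
          apply Subtype.ext; rw [hTCp]; simp only [map_sub, hu, ← hPcp]; simp)
        have := Submodule.mem_map_of_mem (f := C.subtype) this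
        rw [Submodule.map_span] at this
        refine Submodule.span_mono ?_ this
        rintro _ ⟨y, ⟨j, a, rfl, h⟩, rfl⟩
        exact ⟨some j, a, hTCp a _, h⟩
    · intro W _ _ T' w' hw'
      obtain ⟨f, hf1, hf2⟩ := h3 W T' (fun j => w' (some j)) (fun j => hw' (some j))
      let q : V →ₗ[k] C := LinearMap.codRestrict C (LinearMap.id - P) (fun u => by
        rw [LinearMap.mem_ker]; simp [hPP])
      have hqT : ∀ u, q (T u) = TC (q u) := by
        intro u; apply Subtype.ext; simp [q, TC, hPc]
      let F := frob l T T' r (w' none)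
      refine ⟨f ∘ₗ q + F ∘ₗ P, fun u => ?_, ?_⟩
      · have hF : ∀ u, F (T u) = T' (F u) :=
          frob_comm l T T' r _ (fun u => by rw [hTx]; simp) (hw' none)
        simp only [LinearMap.add_apply, LinearMap.comp_apply, hqT, hf1, hPc, hF, map_add]
      · rintro (_ | j)
        · have : q x = 0 := by apply Subtype.ext; simp [q, hPx]
          have h4 : F x = w' none := frob_self T T' r hr0 x l hl _
          simp [this, hPx, h4]
        · have hPw : P (w j) = 0 := (w j).2
          have : q (w j) = w j := by apply Subtype.ext; simp [q, hPw]
          simp [this, hPw, hf2]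
end SN

namespace SN
universe v
variable {k : Type} [Field k]

section lift1
variable {V V' : Type v} [AddCommGroup V] [Module k V] [AddCommGroup V'] [Module k V']

theorem lift1 [FiniteDimensional k V] (T : V →ₗ[k] V) (T' : V' →ₗ[k] V')
    (U : Submodule k V) (U' : Submodule k V') (hT : IsNilpotent T)
    (hU : ∀ u ∈ U, T u ∈ U) (hU' : ∀ u ∈ U', T' u ∈ U') (R : ℕ → Submodule k (V × V'))
    (tot : ∀ i u, u ∈ U → u ∈ LinearMap.range (T ^ i) →
      ∃ u', u' ∈ U' ∧ u' ∈ LinearMap.range (T' ^ i) ∧ (u, u') ∈ R i)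
    (zer : ∀ i u', (0, u') ∈ R i → u' ∈ U'.map (T' ^ i))
    (sat : ∀ i, ∀ u ∈ U, ∀ u' ∈ U', ((T ^ i) u, (T' ^ i) u') ∈ R i)
    (sh : ∀ i u u', (u, u') ∈ R i → (T u, T' u') ∈ R (i + 1))
    (inc : ∀ i u u', (u, u') ∈ R (i + 1) → (u, u') ∈ R i) :
    ∃ g : V →ₗ[k] V', (∀ u, g (T u) = T' (g u)) ∧ (∀ u ∈ U, g u ∈ U') ∧
      ∀ i u, u ∈ U → u ∈ LinearMap.range (T ^ i) → (u, g u) ∈ R i := by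
  have shn : ∀ m i u u', (u, u') ∈ R i → ((T ^ m) u, (T' ^ m) u') ∈ R (i + m) := by
    intro m; induction m with
    | zero => simp
    | succ m ih => intro i u u' h; rw [pow_succ_apply, pow_succ_apply]; exact sh _ _ _ (ih _ _ _ h)
  have incn : ∀ m i u u', (u, u') ∈ R (i + m) → (u, u') ∈ R i := by
    intro m; induction m with
    | zero => simp
    | succ m ih => intro i u u' h; exact ih _ _ _ (inc _ _ _ h)
  let TW : (V ⧸ U) →ₗ[k] (V ⧸ U) := U.mapQ U T hU
  let TW' : (V' ⧸ U') →ₗ[k] (V' ⧸ U') := U'.mapQ U' T' hU'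
  have hTW : ∀ i u, (TW ^ i) (U.mkQ u) = U.mkQ ((T ^ i) u) := by
    intro i; induction i with
    | zero => simp
    | succ i ih => intro u; rw [pow_succ_apply, pow_succ_apply, ih]; rfl
  have hTW' : ∀ i u, (TW' ^ i) (U'.mkQ u) = U'.mkQ ((T' ^ i) u) := by
    intro i; induction i with
    | zero => simp
    | succ i ih => intro u; rw [pow_succ_apply, pow_succ_apply, ih]; rfl
  obtain ⟨N, hN⟩ := hT
  have hTN : ∀ u, (T ^ N) u = 0 := fun u => by rw [hN]; rfl
  have hnilW : IsNilpotent TW := ⟨N, by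
    ext u; simp only [LinearMap.comp_apply]; rw [hTW, hTN]; simp⟩
  obtain ⟨ι, w, n, h1, h2, h3⟩ := jordan _ (V ⧸ U) TW hnilW rfl
  have hch : ∀ j, ∃ x x', U.mkQ x = w j ∧ (TW' ^ n j) (U'.mkQ x') = 0 ∧
      ((T ^ n j) x, (T' ^ n j) x') ∈ R (n j) := by
    intro j
    obtain ⟨x, hx⟩ := U.mkQ_surjective (w j)
    have hxU : (T ^ n j) x ∈ U := by
      have := h1 j
      rw [← hx, hTW] at this
      simpa using this
    obtain ⟨u', hu', ⟨x', rfl⟩, hR⟩ := tot (n j) _ hxU ⟨x, rfl⟩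
    exact ⟨x, x', hx, by rw [hTW']; simpa using hu', hR⟩
  choose x x' hx hx' hxR using hch
  obtain ⟨G, hG1, hG2⟩ := h3 (V' ⧸ U') TW' (fun j => U'.mkQ (x' j)) hx'
  have hG1n : ∀ i u, G ((TW ^ i) u) = (TW' ^ i) (G u) := by
    intro i; induction i with
    | zero => simp
    | succ i ih => intro u; rw [pow_succ_apply, pow_succ_apply, hG1, ih]
  -- compatibility of `G`
  have hex : ∀ i y, (TW ^ i) y = 0 → ∃ a a', U.mkQ a = y ∧ U'.mkQ a' = G y ∧
      ((T ^ i) a, (T' ^ i) a') ∈ R i := by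
    intro i y hy
    have hys := h2 i y hy
    clear hy
    induction hys using Submodule.span_induction with
    | mem y hy =>
      obtain ⟨j, a, rfl, ha, hai⟩ := hy
      refine ⟨(T ^ a) (x j), (T' ^ a) (x' j), ?_, ?_, ?_⟩
      · rw [← hTW, hx]
      · rw [hG1n, hG2, hTW']
      · have h4 := incn a (n j - a) _ _ (by rw [Nat.sub_add_cancel ha.le]; exact hxR j)
        have h5 := shn (i - (n j - a)) _ _ _ h4
        rw [← pow_add_apply, ← pow_add_apply] at h5
        rw [← pow_add_apply, ← pow_add_apply]
        have e1 : i - (n j - a) + n j = i + a := by omega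
        have e2 : n j - a + (i - (n j - a)) = i := by omega
        rwa [e1, e2] at h5
    | zero => exact ⟨0, 0, by simp, by simp, by rw [map_zero, map_zero]; exact (R i).zero_mem⟩
    | add y z _ _ ihy ihz =>
      obtain ⟨a, a', e1, e2, e3⟩ := ihy
      obtain ⟨b, b', f1, f2, f3⟩ := ihz
      refine ⟨a + b, a' + b', by simp [← e1, ← f1], by rw [map_add, map_add, e2, f2], ?_⟩
      simpa using (R i).add_mem e3 f3
    | smul c y _ ih =>
      obtain ⟨a, a', e1, e2, e3⟩ := ih
      exact ⟨c • a, c • a', by simp [← e1], by rw [map_smul, map_smul, e2], by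
          simpa using (R i).smul_mem c e3⟩
  have hall : ∀ i a a', (T ^ i) a ∈ U → U'.mkQ a' = G (U.mkQ a) → ((T ^ i) a, (T' ^ i) a') ∈ R i := by
    intro i a a' ha haa
    obtain ⟨b, b', e1, e2, e3⟩ := hex i (U.mkQ a) (by rw [hTW]; simpa using ha)
    have m1 : a - b ∈ U := by
      have : U.mkQ (a - b) = 0 := by rw [map_sub, e1, sub_self]
      exact (Submodule.Quotient.mk_eq_zero _).1 this
    have m2 : a' - b' ∈ U' := by
      have : U'.mkQ (a' - b') = 0 := by rw [map_sub, e2, haa, sub_self]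
      exact (Submodule.Quotient.mk_eq_zero _).1 this
    have := (R i).add_mem e3 (sat i _ m1 _ m2)
    simpa using this
  -- lift to `V`
  obtain ⟨κ, z, m, k1, k2, k3⟩ := jordan _ V T ⟨N, hN⟩ rfl
  have hch : ∀ j, ∃ z', (T' ^ m j) z' = 0 ∧ U'.mkQ z' = G (U.mkQ (z j)) := by
    intro j
    obtain ⟨a', ha'⟩ := U'.mkQ_surjective (G (U.mkQ (z j)))
    have := hall (m j) (z j) a' (by rw [k1]; exact U.zero_mem) ha'
    rw [k1] at this
    obtain ⟨u', hu', h⟩ := zer _ _ this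
    refine ⟨a' - u', by rw [map_sub, h, sub_self], ?_⟩
    have : U'.mkQ u' = 0 := by simpa using hu'
    rw [map_sub, this, ha', sub_zero]
  choose z' hz' hz'' using hch
  obtain ⟨g, hg1, hg2⟩ := k3 V' T' z' hz'
  have hg1n : ∀ i u, g ((T ^ i) u) = (T' ^ i) (g u) := by
    intro i; induction i with
    | zero => simp
    | succ i ih => intro u; rw [pow_succ_apply, pow_succ_apply, hg1, ih]
  have hgG : ∀ u, U'.mkQ (g u) = G (U.mkQ u) := by
    intro u
    have := k2 N u (hTN u)
    induction this using Submodule.span_induction with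
    | mem y hy =>
      obtain ⟨j, a, rfl, -⟩ := hy
      rw [hg1n, hg2, ← hTW', ← hTW, hG1n, hz'']
    | zero => simp
    | add y z _ _ ihy ihz => simp only [map_add, ihy, ihz]
    | smul c y _ ih => simp only [map_smul, ih]
  refine ⟨g, hg1, fun u hu => ?_, ?_⟩
  · have h : U.mkQ u = 0 := by simpa using hu
    have := hgG u
    rw [h, map_zero] at this
    simpa using this
  · rintro i _ hu ⟨a, rfl⟩
    rw [hg1n]
    exact hall i a (g a) hu (hgG a)
end lift1
end SN

namespace SN
universe v

/-- A vector space with some operators and some subspaces. -/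
structure Ob (k : Type) [Field k] (a b : ℕ) where
  V : Type v
  [ac : AddCommGroup V]
  [md : Module k V]
  [fd : FiniteDimensional k V]
  op : Fin a → V →ₗ[k] V
  sub : Fin b → Submodule k V

attribute [instance] Ob.ac Ob.md Ob.fd

variable {k : Type} [Field k] {a b : ℕ}

/-- Structure preserving maps. -/
def IsHom (X Y : Ob.{v} k a b) (f : X.V →ₗ[k] Y.V) : Prop :=
  (∀ i u, f (X.op i u) = Y.op i (f u)) ∧ ∀ i, ∀ u ∈ X.sub i, f u ∈ Y.sub i

/-- Two objects which share an indecomposable summand. -/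
def Linked (X Y : Ob.{v} k a b) : Prop :=
  ∃ (f : X.V →ₗ[k] Y.V) (g : Y.V →ₗ[k] X.V), IsHom X Y f ∧ IsHom Y X g ∧
    ¬ IsNilpotent (g ∘ₗ f : Module.End k X.V)

/-- Finitely many types of objects. -/
def FinL (good : Ob.{v} k a b → Prop) : Prop :=
  ∃ (τ : Type) (_ : Finite τ) (P : τ → Ob.{v} k a b → Prop),
    (∀ X, good X → ∃ t, P t X) ∧ ∀ t X Y, P t X → P t Y → Linked X Y

theorem FinL.or {g1 g2 : Ob.{v} k a b → Prop} (h1 : FinL g1) (h2 : FinL g2) :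
    FinL (fun X => g1 X ∨ g2 X) := by
  obtain ⟨τ, _, P, hP, hP'⟩ := h1
  obtain ⟨σ, _, Q, hQ, hQ'⟩ := h2
  refine ⟨τ ⊕ σ, inferInstance, fun t X => Sum.elim (fun t => P t X) (fun t => Q t X) t, ?_, ?_⟩
  · rintro X (h | h)
    · obtain ⟨t, ht⟩ := hP X h; exact ⟨Sum.inl t, ht⟩
    · obtain ⟨t, ht⟩ := hQ X h; exact ⟨Sum.inr t, ht⟩
  · rintro (t | t) X Y h h'
    · exact hP' t X Y h h'
    · exact hQ' t X Y h h'

theorem FinL.mono {g1 g2 : Ob.{v} k a b → Prop} (h1 : FinL g1) (h : ∀ X, g2 X → g1 X) : FinL g2 := by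
  obtain ⟨τ, i, P, hP, hP'⟩ := h1
  exact ⟨τ, i, P, fun X hX => hP X (h X hX), hP'⟩

theorem not_nil_of_dual {V : Type v} [AddCommGroup V] [Module k V] (h : Module.End k V)
    (l : V →ₗ[k] k) (x : V) (hx : l x ≠ 0) (hl : ∀ u, l (h u) = l u) : ¬ IsNilpotent h := by
  rintro ⟨n, hn⟩
  have : ∀ n, l ((h ^ n) x) = l x := by
    intro n; induction n with
    | zero => simp
    | succ n ih => rw [pow_succ_apply, hl, ih]
  apply hx
  rw [← this n, hn]; simp

theorem not_nil_of_fix {V : Type v} [AddCommGroup V] [Module k V] (h : Module.End k V)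
    (x : V) (hx : x ≠ 0) (hl : h x = x) : ¬ IsNilpotent h := by
  rintro ⟨n, hn⟩
  have : ∀ n, (h ^ n) x = x := by
    intro n; induction n with
    | zero => simp
    | succ n ih => rw [pow_succ_apply, ih, hl]
  apply hx
  rw [← this n, hn]; simp

/-- Stage lemma: transfer of finiteness along a full functor. -/
theorem FinL.stage {a' b' : ℕ} (F : Ob.{v} k a b → Ob.{v} k a' b') (good : Ob.{v} k a b → Prop)
    (good' : Ob.{v} k a' b' → Prop) (hg : ∀ X, good X → good' (F X))
    (Ind : ∀ X Y : Ob.{v} k a b, (X.V →ₗ[k] Y.V) → ((F X).V →ₗ[k] (F Y).V) → Prop)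
    (hnil : ∀ X Y f g φ ψ, IsHom X Y f → IsHom Y X g → Ind X Y f φ → Ind Y X g ψ →
      IsNilpotent (g ∘ₗ f : Module.End k X.V) → IsNilpotent (ψ ∘ₗ φ : Module.End k (F X).V))
    (lift : ∀ X Y, good X → good Y → ∀ φ, IsHom (F X) (F Y) φ → ∃ f, IsHom X Y f ∧ Ind X Y f φ)
    (h : FinL good') : FinL good := by
  obtain ⟨τ, i, P, hP, hP'⟩ := h
  refine ⟨τ, i, fun t X => good X ∧ P t (F X), fun X hX => ?_, ?_⟩
  · obtain ⟨t, ht⟩ := hP _ (hg X hX); exact ⟨t, hX, ht⟩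
  · rintro t X Y ⟨hX, hX'⟩ ⟨hY, hY'⟩
    obtain ⟨φ, ψ, h1, h2, h3⟩ := hP' t _ _ hX' hY'
    obtain ⟨f, f1, f2⟩ := lift X Y hX hY φ h1
    obtain ⟨g, g1, g2⟩ := lift Y X hY hX ψ h2
    exact ⟨f, g, f1, g1, fun hn => h3 (hnil X Y f g φ ψ f1 g1 f2 g2 hn)⟩

/-- the scalar of a degree -/
def sg (k : Type) [Field k] (c : Bool) : k := if c then 1 else 0

section hom
variable {V : Type v} [AddCommGroup V] [Module k V] (e : V →ₗ[k] V)

theorem exists_homog (he : ∀ u, e (e u) = e u)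
    (S : Submodule k V) (hS : ∀ u ∈ S, e u ∈ S) (z : V) (hz : z ∈ S)
    (hz0 : z ≠ 0) : ∃ c, ∃ x ∈ S, x ≠ 0 ∧ e x = sg k c • x := by
  by_cases h : e z = 0
  · exact ⟨false, z, hz, hz0, by simp [sg, h]⟩
  · exact ⟨true, e z, hS z hz, h, by simp [sg, he]⟩

theorem exists_homog_dual (he : ∀ u, e (e u) = e u)
    (S : Submodule k V) (hS : ∀ u ∈ S, e u ∈ S) (z : V) (hz : z ∉ S)
    (c : Bool) (hc : e z = sg k c • z) :
    ∃ l : V →ₗ[k] k, l z = 1 ∧ (∀ u ∈ S, l u = 0) ∧ ∀ u, l (e u) = sg k c * l u := by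
  obtain ⟨l, hl, hlS⟩ := Submodule.exists_le_ker_of_notMem hz
  have h0 : ∀ u ∈ S, l u = 0 := fun u hu => hlS hu
  cases c
  · refine ⟨(l z)⁻¹ • (l - l ∘ₗ e), ?_, fun u hu => ?_, fun u => ?_⟩
    · simp [hc, sg, hl]
    · simp [h0 u hu, h0 _ (hS u hu)]
    · simp [he, sg]
  · refine ⟨(l z)⁻¹ • (l ∘ₗ e), ?_, fun u hu => ?_, fun u => ?_⟩
    · simp [hc, sg, hl]
    · simp [h0 _ (hS u hu)]
    · simp [he, sg]
end hom

/-- one dimensional summands -/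
def LineP (s : Fin a → Bool) (t : Fin b → Bool) (X : Ob.{v} k a b) : Prop :=
  ∃ (x : X.V) (l : X.V →ₗ[k] k), l x = 1 ∧ (∀ i, X.op i x = sg k (s i) • x) ∧
    (∀ i u, l (X.op i u) = sg k (s i) * l u) ∧
    ∀ i, (t i = true → x ∈ X.sub i) ∧ (t i = false → ∀ u ∈ X.sub i, l u = 0)

theorem LineP.linked {s : Fin a → Bool} {t : Fin b → Bool} {X Y : Ob.{v} k a b}
    (hX : LineP s t X) (hY : LineP s t Y) : Linked X Y := by
  have key : ∀ X Y : Ob.{v} k a b, ∀ (x : Y.V) (l : X.V →ₗ[k] k), (∀ i, Y.op i x = sg k (s i) • x) →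
      (∀ i u, l (X.op i u) = sg k (s i) * l u) →
      (∀ i, (t i = true → x ∈ Y.sub i)) → (∀ i, t i = false → ∀ u ∈ X.sub i, l u = 0) →
      IsHom X Y (l.smulRight x) := by
    intro X Y x l h1 h2 h3 h4
    refine ⟨fun i u => ?_, fun i u hu => ?_⟩
    · simp only [LinearMap.smulRight_apply, map_smul, h1, h2, smul_smul]; rw [mul_comm]
    · rw [LinearMap.smulRight_apply]
      cases ht : t i
      · rw [h4 i ht u hu, zero_smul]; exact Submodule.zero_mem _
      · exact Submodule.smul_mem _ _ (h3 i ht)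
  obtain ⟨x, l, h0, h1, h2, h3⟩ := hX
  obtain ⟨y, m, k0, k1, k2, k3⟩ := hY
  refine ⟨_, _, key X Y y l k1 h2 (fun i => (k3 i).1) (fun i => (h3 i).2),
    key Y X x m h1 k2 (fun i => (h3 i).1) (fun i => (k3 i).2), ?_⟩
  apply not_nil_of_dual _ l x (by rw [h0]; exact one_ne_zero)
  intro u
  simp [k0, h0]

/-- two dimensional summands of the second kind -/
def DiagP (c : Bool) (d : Fin 3) (X : Ob.{v} k 2 4) : Prop :=
  ∃ (x y : X.V) (l m : X.V →ₗ[k] k), l x = 1 ∧ m y = 1 ∧ (∀ u, X.op 0 u = 0) ∧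
    x ∈ X.sub 0 ∧ y ∈ X.sub 1 ∧ (∀ u ∈ X.sub 1, l u = 0) ∧ (∀ u ∈ X.sub 0, m u = 0) ∧
    X.op 1 x = sg k c • x ∧ X.op 1 y = sg k c • y ∧
    (∀ u, l (X.op 1 u) = sg k c * l u) ∧ (∀ u, m (X.op 1 u) = sg k c * m u) ∧
    (d = 0 → x + y ∈ X.sub 2 ∧ x + y ∈ X.sub 3 ∧ (∀ u ∈ X.sub 2, l u = m u) ∧
      ∀ u ∈ X.sub 3, l u = m u) ∧
    (d = 1 → x + y ∈ X.sub 3 ∧ (∀ u ∈ X.sub 2, l u = 0 ∧ m u = 0) ∧ ∀ u ∈ X.sub 3, l u = m u) ∧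
    (d = 2 → x + y ∈ X.sub 2 ∧ x ∈ X.sub 3 ∧ y ∈ X.sub 3 ∧ ∀ u ∈ X.sub 2, l u = m u)

theorem forall_fin_four {P : Fin 4 → Prop} (h0 : P 0) (h1 : P 1) (h2 : P 2) (h3 : P 3) : ∀ i, P i := by
  intro i; fin_cases i <;> assumption

theorem DiagP.hom {c : Bool} {d : Fin 3} (X Y : Ob.{v} k 2 4) (l m : X.V →ₗ[k] k) (x y : Y.V)
    (hX0 : ∀ u, X.op 0 u = 0) (hY0 : ∀ u, Y.op 0 u = 0)
    (hx : x ∈ Y.sub 0) (hy : y ∈ Y.sub 1) (hl : ∀ u ∈ X.sub 1, l u = 0) (hm : ∀ u ∈ X.sub 0, m u = 0)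
    (ex : Y.op 1 x = sg k c • x) (ey : Y.op 1 y = sg k c • y)
    (el : ∀ u, l (X.op 1 u) = sg k c * l u) (em : ∀ u, m (X.op 1 u) = sg k c * m u)
    (a0 : d = 0 → x + y ∈ Y.sub 2 ∧ x + y ∈ Y.sub 3)
    (b0 : d = 0 → (∀ u ∈ X.sub 2, l u = m u) ∧ ∀ u ∈ X.sub 3, l u = m u)
    (a1 : d = 1 → x + y ∈ Y.sub 3)
    (b1 : d = 1 → (∀ u ∈ X.sub 2, l u = 0 ∧ m u = 0) ∧ ∀ u ∈ X.sub 3, l u = m u)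
    (a2 : d = 2 → x + y ∈ Y.sub 2 ∧ x ∈ Y.sub 3 ∧ y ∈ Y.sub 3)
    (b2 : d = 2 → ∀ u ∈ X.sub 2, l u = m u) :
    IsHom X Y (l.smulRight x + m.smulRight y) := by
  have hd : ∀ S : Submodule k Y.V, x + y ∈ S → ∀ u, l u = m u →
      (l.smulRight x + m.smulRight y) u ∈ S := by
    intro S h u hu
    simp only [LinearMap.add_apply, LinearMap.smulRight_apply, hu, ← smul_add]
    exact S.smul_mem _ h
  have hxy : ∀ S : Submodule k Y.V, x ∈ S → y ∈ S → ∀ u, (l.smulRight x + m.smulRight y) u ∈ S := by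
    intro S h h' u
    simp only [LinearMap.add_apply, LinearMap.smulRight_apply]
    exact S.add_mem (S.smul_mem _ h) (S.smul_mem _ h')
  refine ⟨?_, ?_⟩
  · rw [Fin.forall_fin_two]
    refine ⟨fun u => by rw [hX0, hY0, map_zero], fun u => ?_⟩
    simp only [LinearMap.add_apply, LinearMap.smulRight_apply, map_add, map_smul, ex, ey, el, em,
      smul_smul]
    rw [mul_comm, mul_comm (m u)]
  · refine forall_fin_four ?_ ?_ ?_ ?_
    · intro u hu
      simpa [hm u hu] using Submodule.smul_mem _ _ hx
    · intro u hu
      simpa [hl u hu] using Submodule.smul_mem _ _ hy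
    · intro u hu
      fin_cases d
      · exact hd _ (a0 rfl).1 u ((b0 rfl).1 u hu)
      · simp [(b1 rfl).1 u hu]
      · exact hd _ (a2 rfl).1 u (b2 rfl u hu)
    · intro u hu
      fin_cases d
      · exact hd _ (a0 rfl).2 u ((b0 rfl).2 u hu)
      · exact hd _ (a1 rfl) u ((b1 rfl).2 u hu)
      · exact hxy _ (a2 rfl).2.1 (a2 rfl).2.2 u

theorem DiagP.linked {c : Bool} {d : Fin 3} {X Y : Ob.{v} k 2 4}
    (hX : DiagP c d X) (hY : DiagP c d Y) : Linked X Y := by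
  obtain ⟨x, y, l, m, p1, p2, p3, p4, p5, p6, p7, p8, p9, p10, p11, p12, p13, p14⟩ := hX
  obtain ⟨x', y', l', m', q1, q2, q3, q4, q5, q6, q7, q8, q9, q10, q11, q12, q13, q14⟩ := hY
  refine ⟨_, _, DiagP.hom (c := c) (d := d) X Y l m x' y' p3 q3 q4 q5 p6 p7 q8 q9 p10 p11
      (fun h => ⟨(q12 h).1, (q12 h).2.1⟩) (fun h => (p12 h).2.2) (fun h => (q13 h).1)
      (fun h => (p13 h).2) (fun h => ⟨(q14 h).1, (q14 h).2.1, (q14 h).2.2.1⟩)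
      (fun h => (p14 h).2.2.2),
    DiagP.hom (c := c) (d := d) Y X l' m' x y q3 p3 p4 p5 q6 q7 p8 p9 q10 q11
      (fun h => ⟨(p12 h).1, (p12 h).2.1⟩) (fun h => (q12 h).2.2) (fun h => (p13 h).1)
      (fun h => (q13 h).2) (fun h => ⟨(p14 h).1, (p14 h).2.1, (p14 h).2.2.1⟩)
      (fun h => (q14 h).2.2.2), ?_⟩
  apply not_nil_of_dual _ l x (by rw [p1]; exact one_ne_zero)
  intro u
  simp [p1, q1, q6 _ q5, p6 _ p5]

/-- two dimensional summands of the first kind -/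
def ArrP (c : Bool) (t : Fin 4 → Bool) (X : Ob.{v} k 2 4) : Prop :=
  ∃ (x : X.V) (m : X.V →ₗ[k] k), m (X.op 0 x) = 1 ∧ (∀ u, X.op 0 (X.op 0 u) = 0) ∧
    (∀ u, X.op 0 (X.op 1 u) + X.op 1 (X.op 0 u) = X.op 0 u) ∧
    (∀ u ∈ X.sub 0, X.op 0 u = 0) ∧ (∀ u ∈ X.sub 1, X.op 0 u = 0) ∧
    X.op 0 x ∈ X.sub 0 ∧ X.op 0 x ∈ X.sub 1 ∧
    X.op 1 x = sg k c • x ∧ (∀ u, m (X.op 1 u) = (1 - sg k c) * m u) ∧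
    (t 0 = true → x ∈ X.sub 2) ∧ (t 0 = false → ∀ u ∈ X.sub 2, m (X.op 0 u) = 0) ∧
    (t 1 = true → x ∈ X.sub 3) ∧ (t 1 = false → ∀ u ∈ X.sub 3, m (X.op 0 u) = 0) ∧
    (t 2 = true → X.op 0 x ∈ X.sub 2) ∧ (t 2 = false → ∀ u ∈ X.sub 2, m u = 0) ∧
    (t 3 = true → X.op 0 x ∈ X.sub 3) ∧ (t 3 = false → ∀ u ∈ X.sub 3, m u = 0)

theorem ArrP.linked {c : Bool} {t : Fin 4 → Bool} {X Y : Ob.{v} k 2 4}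
    (hX : ArrP c t X) (hY : ArrP c t Y) : Linked X Y := by
  have key : ∀ X Y : Ob.{v} k 2 4, ArrP c t X → ArrP c t Y →
      ∃ (x : X.V) (m : X.V →ₗ[k] k) (x' : Y.V) (m' : Y.V →ₗ[k] k), True := by
    intros; exact ⟨0, 0, 0, 0, trivial⟩
  obtain ⟨x, m, p1, p2, p3, p4, p5, p6, p7, p8, p9, p10, p11, p12, p13, p14, p15, p16, p17⟩ := hX
  obtain ⟨x', m', q1, q2, q3, q4, q5, q6, q7, q8, q9, q10, q11, q12, q13, q14, q15, q16, q17⟩ := hY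
  have key : ∀ (X Y : Ob.{v} k 2 4) (x : Y.V) (m : X.V →ₗ[k] k),
      (∀ u, X.op 0 (X.op 0 u) = 0) → (∀ u, Y.op 0 (Y.op 0 u) = 0) →
      (∀ u, X.op 0 (X.op 1 u) + X.op 1 (X.op 0 u) = X.op 0 u) →
      (∀ u, Y.op 0 (Y.op 1 u) + Y.op 1 (Y.op 0 u) = Y.op 0 u) →
      (∀ u ∈ X.sub 0, X.op 0 u = 0) → (∀ u ∈ X.sub 1, X.op 0 u = 0) →
      Y.op 0 x ∈ Y.sub 0 → Y.op 0 x ∈ Y.sub 1 →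
      Y.op 1 x = sg k c • x → (∀ u, m (X.op 1 u) = (1 - sg k c) * m u) →
      (t 0 = true → x ∈ Y.sub 2) → (t 0 = false → ∀ u ∈ X.sub 2, m (X.op 0 u) = 0) →
      (t 1 = true → x ∈ Y.sub 3) → (t 1 = false → ∀ u ∈ X.sub 3, m (X.op 0 u) = 0) →
      (t 2 = true → Y.op 0 x ∈ Y.sub 2) → (t 2 = false → ∀ u ∈ X.sub 2, m u = 0) →
      (t 3 = true → Y.op 0 x ∈ Y.sub 3) → (t 3 = false → ∀ u ∈ X.sub 3, m u = 0) →
      IsHom X Y ((m ∘ₗ X.op 0).smulRight x + m.smulRight (Y.op 0 x)) := by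
    intro X Y x m h1 h2 h3 h4 h5 h6 h7 h8 h9 h10 a0 b0 a1 b1 a2 b2 a3 b3
    refine ⟨?_, ?_⟩
    · rw [Fin.forall_fin_two]
      refine ⟨fun u => by simp [h1, h2], fun u => ?_⟩
      have e1 : X.op 0 (X.op 1 u) = X.op 0 u - X.op 1 (X.op 0 u) := eq_sub_of_add_eq (h3 u)
      have e2 : Y.op 1 (Y.op 0 x) = Y.op 0 x - Y.op 0 (Y.op 1 x) := eq_sub_of_add_eq' (h4 x)
      simp only [LinearMap.add_apply, LinearMap.smulRight_apply, LinearMap.comp_apply, map_add,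
        map_smul, e1, e2, h9, h10, map_sub]
      module
    · refine forall_fin_four ?_ ?_ ?_ ?_ <;> intro u hu <;>
        simp only [LinearMap.add_apply, LinearMap.smulRight_apply, LinearMap.comp_apply]
      · rw [h5 u hu]; simpa using Submodule.smul_mem _ _ h7
      · rw [h6 u hu]; simpa using Submodule.smul_mem _ _ h8
      · refine Submodule.add_mem _ ?_ ?_
        · cases h : t 0
          · rw [b0 h u hu, zero_smul]; exact Submodule.zero_mem _
          · exact Submodule.smul_mem _ _ (a0 h)
        · cases h : t 2
          · rw [b2 h u hu, zero_smul]; exact Submodule.zero_mem _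
          · exact Submodule.smul_mem _ _ (a2 h)
      · refine Submodule.add_mem _ ?_ ?_
        · cases h : t 1
          · rw [b1 h u hu, zero_smul]; exact Submodule.zero_mem _
          · exact Submodule.smul_mem _ _ (a1 h)
        · cases h : t 3
          · rw [b3 h u hu, zero_smul]; exact Submodule.zero_mem _
          · exact Submodule.smul_mem _ _ (a3 h)
  refine ⟨_, _, key X Y x' m p2 q2 p3 q3 p4 p5 q6 q7 q8 p9 q10 p11 q12 p13 q14 p15 q16 p17,
    key Y X x m' q2 p2 q3 p3 q4 q5 p6 p7 p8 q9 p10 q11 p12 q13 p14 q15 p16 q17, ?_⟩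
  apply not_nil_of_dual _ (m ∘ₗ X.op 0) x (by simp [p1])
  intro u
  simp [p1, p2, q1, q2]

/-- the conditions on the final category -/
structure Good2 (X : Ob.{v} k 2 4) : Prop where
  TT : ∀ u, X.op 0 (X.op 0 u) = 0
  ee : ∀ u, X.op 1 (X.op 1 u) = X.op 1 u
  Te : ∀ u, X.op 0 (X.op 1 u) + X.op 1 (X.op 0 u) = X.op 0 u
  st : ∀ i, ∀ u ∈ X.sub i, X.op 1 u ∈ X.sub i
  ker : ∀ u, X.op 0 u = 0 → u ∈ X.sub 0 ⊔ X.sub 1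
  ker0 : ∀ u ∈ X.sub 0, X.op 0 u = 0
  ker1 : ∀ u ∈ X.sub 1, X.op 0 u = 0
  im : ∀ u ∈ X.sub 0, u ∈ X.sub 1 → ∃ y, X.op 0 y = u
  im0 : ∀ u, X.op 0 u ∈ X.sub 0
  im1 : ∀ u, X.op 0 u ∈ X.sub 1
  IK : X.sub 2 ≤ X.sub 3
  nt : ∃ u : X.V, u ≠ 0

theorem exists_arr (X : Ob.{v} k 2 4) (h : Good2 X) (hT : ∃ u, X.op 0 u ≠ 0) :
    ∃ c t, ArrP c t X := by
  -- choose a level `A` for `x`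
  have step1 : ∃ (A : Submodule k X.V) (t0 t1 : Bool), (∀ u ∈ A, X.op 1 u ∈ A) ∧
      (∃ u ∈ A, X.op 0 u ≠ 0) ∧ (t0 = true → A ≤ X.sub 2) ∧ (t0 = false → ∀ u ∈ X.sub 2, X.op 0 u = 0) ∧
      (t1 = true → A ≤ X.sub 3) ∧ (t1 = false → ∀ u ∈ X.sub 3, X.op 0 u = 0) := by
    by_cases h2 : ∃ u ∈ X.sub 2, X.op 0 u ≠ 0
    · exact ⟨X.sub 2, true, true, h.st 2, h2, fun _ => le_rfl, by simp, fun _ => h.IK, by simp⟩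
    push Not at h2
    by_cases h3 : ∃ u ∈ X.sub 3, X.op 0 u ≠ 0
    · exact ⟨X.sub 3, false, true, h.st 3, h3, by simp, fun _ => h2, fun _ => le_rfl, by simp⟩
    push Not at h3
    obtain ⟨u, hu⟩ := hT
    exact ⟨⊤, false, false, by simp, ⟨u, trivial, hu⟩, by simp, fun _ => h2, by simp, fun _ => h3⟩
  obtain ⟨A, t0, t1, hA, ⟨u, hu, hu0⟩, a0, b0, a1, b1⟩ := step1
  have step2 : ∃ (S B : Submodule k X.V) (t2 t3 : Bool), (∀ u ∈ B, X.op 1 u ∈ B) ∧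
      (∀ u ∈ S, X.op 1 u ∈ S) ∧
      (∃ u ∈ A, X.op 0 u ≠ 0 ∧ X.op 0 u ∈ B) ∧ (∀ u ∈ A, X.op 0 u ∈ S → X.op 0 u = 0) ∧
      (t2 = true → B ≤ X.sub 2) ∧ (t2 = false → X.sub 2 ≤ S) ∧
      (t3 = true → B ≤ X.sub 3) ∧ (t3 = false → X.sub 3 ≤ S) := by
    by_cases h2 : ∃ u ∈ A, X.op 0 u ≠ 0 ∧ X.op 0 u ∈ X.sub 2
    · exact ⟨⊥, X.sub 2, true, true, h.st 2, by simp, h2, fun _ _ h => h, fun _ => le_rfl, by simp,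
        fun _ => h.IK, by simp⟩
    by_cases h3 : ∃ u ∈ A, X.op 0 u ≠ 0 ∧ X.op 0 u ∈ X.sub 3
    · exact ⟨X.sub 2, X.sub 3, false, true, h.st 3, h.st 2, h3,
        fun u hu hu' => by by_contra h0; exact h2 ⟨u, hu, h0, hu'⟩, by simp, fun _ => le_rfl,
        fun _ => le_rfl, by simp⟩
    · exact ⟨X.sub 3, ⊤, false, false, by simp, h.st 3, ⟨u, hu, hu0, trivial⟩,
        fun u hu hu' => by by_contra h0; exact h3 ⟨u, hu, h0, hu'⟩, by simp, fun _ => h.IK,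
        by simp, fun _ => le_rfl⟩
  obtain ⟨S, B, t2, t3, hB, hS, ⟨y, hy, hy0, hyB⟩, hAS, a2, b2, a3, b3⟩ := step2
  -- homogeneous `x`
  obtain ⟨c, x, hxA, hx0, hxB, hxc⟩ : ∃ c, ∃ x ∈ A, X.op 0 x ≠ 0 ∧ X.op 0 x ∈ B ∧
      X.op 1 x = sg k c • x := by
    have e1 : X.op 0 (X.op 1 y) = X.op 0 y - X.op 1 (X.op 0 y) := eq_sub_of_add_eq (h.Te y)
    by_cases h0 : X.op 0 (X.op 1 y) = 0
    · refine ⟨false, y - X.op 1 y, A.sub_mem hy (hA y hy), ?_, ?_, by simp [sg, h.ee]⟩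
      · rw [map_sub, h0, sub_zero]; exact hy0
      · rw [map_sub, h0, sub_zero]; exact hyB
    · refine ⟨true, X.op 1 y, hA y hy, h0, ?_, by simp [sg, h.ee]⟩
      rw [e1]; exact B.sub_mem hyB (hB _ hyB)
  have hsc : X.op 1 (X.op 0 x) = sg k (!c) • X.op 0 x := by
    have e2 : X.op 1 (X.op 0 x) = X.op 0 x - X.op 0 (X.op 1 x) := eq_sub_of_add_eq' (h.Te x)
    rw [e2, hxc]; cases c <;> simp [sg]
  obtain ⟨m, m1, m2, m3⟩ := exists_homog_dual (X.op 1) h.ee S hS (X.op 0 x)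
    (fun hx => hx0 (hAS x hxA hx)) (!c) hsc
  refine ⟨c, ![t0, t1, t2, t3], x, m, m1, h.TT, h.Te, h.ker0, h.ker1, h.im0 _, h.im1 _, hxc, ?_,
    fun t => a0 t hxA, fun t u hu => by rw [b0 t u hu, map_zero], fun t => a1 t hxA,
    fun t u hu => by rw [b1 t u hu, map_zero], fun t => a2 t hxB, fun t u hu => m2 _ (b2 t hu),
    fun t => a3 t hxB, fun t u hu => m2 _ (b3 t hu)⟩
  intro u; rw [m3]; cases c <;> simp [sg]

end SN

namespace SN
universe v
variable {k : Type} [Field k]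

theorem line_of (X : Ob.{v} k 2 4) (h : Good2 X) (hT : ∀ u, X.op 0 u = 0) (S : Submodule k X.V)
    (hS : ∀ u ∈ S, X.op 1 u ∈ S) (x : X.V) (hx : x ∉ S) (c : Bool) (hc : X.op 1 x = sg k c • x)
    (t : Fin 4 → Bool) (h1 : ∀ i, t i = true → x ∈ X.sub i) (h2 : ∀ i, t i = false → X.sub i ≤ S) :
    LineP ![false, c] t X := by
  obtain ⟨l, l1, l2, l3⟩ := exists_homog_dual (X.op 1) h.ee S hS x hx c hc
  refine ⟨x, l, l1, ?_, ?_, fun i => ⟨h1 i, fun hi u hu => l2 u (h2 i hi hu)⟩⟩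
  · rw [Fin.forall_fin_two]; exact ⟨by simp [sg, hT], by simpa using hc⟩
  · rw [Fin.forall_fin_two]; exact ⟨by simp [sg, hT], by simpa using l3⟩

theorem diag_of (X : Ob.{v} k 2 4) (h : Good2 X) (hT : ∀ u, X.op 0 u = 0)
    (p : X.V →ₗ[k] X.V) (pe : ∀ u, p (X.op 1 u) = X.op 1 (p u)) (p0 : ∀ u, p u ∈ X.sub 0)
    (p1 : ∀ u, u - p u ∈ X.sub 1) (pA : ∀ u ∈ X.sub 0, p u = u) (pB : ∀ u ∈ X.sub 1, p u = 0)
    (S : Submodule k X.V)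
    (hS : ∀ u ∈ S, X.op 1 u ∈ S) (x : X.V) (hxS : x ∈ S) (hx : p x ∉ S) (c : Bool)
    (hc : X.op 1 x = sg k c • x) (d : Fin 3)
    (h0 : d = 0 → x ∈ X.sub 2 ∧ X.sub 3 ≤ S)
    (h1 : d = 1 → X.sub 2 = ⊥ ∧ X.sub 3 ≤ S ∧ x ∈ X.sub 3)
    (h2 : d = 2 → x ∈ X.sub 2 ∧ p x ∈ X.sub 3 ∧ X.sub 2 ≤ S) : DiagP c d X := by
  have hpc : X.op 1 (p x) = sg k c • p x := by rw [← pe, hc, map_smul]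
  obtain ⟨l, l1, l2, l3⟩ := exists_homog_dual (X.op 1) h.ee S hS (p x) hx c hpc
  have hpp : ∀ u, p (p u) = p u := fun u => pA _ (p0 u)
  refine ⟨p x, x - p x, l ∘ₗ p, l ∘ₗ p - l, ?_, ?_, hT, p0 x, p1 x, ?_, ?_, hpc, ?_, ?_, ?_, ?_, ?_, ?_⟩
  · simp [hpp, l1]
  · simp [hpp, l1, l2 x hxS]
  · intro u hu; simp [pB u hu]
  · intro u hu; simp [pA u hu]
  · rw [map_sub, hpc, hc, smul_sub]
  · intro u; simp [pe, l3]
  · intro u; simp [pe, l3, mul_sub]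
  · intro hd
    obtain ⟨a, b⟩ := h0 hd
    refine ⟨by simpa using a, by simpa using h.IK a, fun u hu => ?_, fun u hu => ?_⟩
    · simp [l2 u (b (h.IK hu))]
    · simp [l2 u (b hu)]
  · intro hd
    obtain ⟨a, b, a'⟩ := h1 hd
    refine ⟨by simpa using a', fun u hu => ?_, fun u hu => ?_⟩
    · rw [a] at hu; rw [(Submodule.mem_bot k).1 hu]; simp
    · simp [l2 u (b hu)]
  · intro hd
    obtain ⟨a, b, a'⟩ := h2 hd
    refine ⟨by simpa using a, b, Submodule.sub_mem _ (h.IK a) b, fun u hu => ?_⟩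
    simp [l2 u (a' hu)]

theorem exists_proj {V : Type v} [AddCommGroup V] [Module k V] (A B : Submodule k V)
    (h : ∀ u, u ∈ A ⊔ B) (h' : ∀ u ∈ A, u ∈ B → u = 0) :
    ∃ p : V →ₗ[k] V, (∀ u, p u ∈ A) ∧ (∀ u, u - p u ∈ B) ∧ (∀ u ∈ A, p u = u) ∧ ∀ u ∈ B, p u = 0 := by
  have hc : IsCompl A B := by
    refine ⟨?_, ?_⟩
    · rw [Submodule.disjoint_def]; exact h'
    · rw [codisjoint_iff, eq_top_iff]; exact fun u _ => h u
  have hA : ∀ u ∈ A, (A.projection B hc) u = u := fun u hu => by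
    simpa using Submodule.projection_apply_left hc ⟨u, hu⟩
  have hB : ∀ u ∈ B, (A.projection B hc) u = 0 := fun u hu => by
    simpa using Submodule.projection_apply_right hc ⟨u, hu⟩
  have hm : ∀ u, (A.projection B hc) u ∈ A := fun u => by simp
  refine ⟨A.projection B hc, hm, fun u => ?_, hA, hB⟩
  obtain ⟨a, ha, b, hb, rfl⟩ := Submodule.mem_sup.1 (h u)
  rw [map_add, hA a ha, hB b hb]; simpa using hb

theorem stable_sup {V : Type v} [AddCommGroup V] [Module k V] {A B : Submodule k V}
    {e : V →ₗ[k] V} (hA : ∀ u ∈ A, e u ∈ A) (hB : ∀ u ∈ B, e u ∈ B) : ∀ u ∈ A ⊔ B, e u ∈ A ⊔ B := by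
  intro u hu
  obtain ⟨a, ha, b, hb, rfl⟩ := Submodule.mem_sup.1 hu
  rw [map_add]; exact Submodule.add_mem_sup (hA a ha) (hB b hb)

theorem exists_split (X : Ob.{v} k 2 4) (h : Good2 X) (hT : ∀ u, X.op 0 u = 0) :
    (∃ c t, LineP ![false, c] t X) ∨ ∃ c d, DiagP c d X := by
  have hdis : ∀ u ∈ X.sub 0, u ∈ X.sub 1 → u = 0 := by
    intro u h0 h1; obtain ⟨y, rfl⟩ := h.im u h0 h1; exact hT y
  obtain ⟨p, p0, p1, pA, pB⟩ := exists_proj _ _ (fun u => h.ker u (hT u)) hdis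
  have pe : ∀ u, p (X.op 1 u) = X.op 1 (p u) := by
    intro u
    have : X.op 1 u = X.op 1 (p u) + X.op 1 (u - p u) := by rw [← map_add]; simp
    rw [this, map_add, pA _ (h.st 0 _ (p0 u)), pB _ (h.st 1 _ (p1 u)), add_zero]
  have hom : ∀ S : Submodule k X.V, (∀ u ∈ S, X.op 1 u ∈ S) → (∃ z ∈ S, z ≠ 0) →
      ∃ c, ∃ x ∈ S, x ≠ 0 ∧ X.op 1 x = sg k c • x := by
    rintro S hS ⟨z, hz, hz0⟩; exact exists_homog _ h.ee S hS z hz hz0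
  have line : ∀ (S : Submodule k X.V) (t : Fin 4 → Bool)
    (hS : ∀ u ∈ S, X.op 1 u ∈ S) (x : X.V) (hx : x ∉ S) (c : Bool) (hc : X.op 1 x = sg k c • x)
     (h1 : ∀ i, t i = true → x ∈ X.sub i) (h2 : ∀ i, t i = false → X.sub i ≤ S),
     ∃ c t, LineP ![false, c] t X := fun S t hS x hx c hc h1 h2 =>
      ⟨c, t, line_of X h hT S hS x hx c hc t h1 h2⟩
  have inter : ∀ i j, ∀ u ∈ X.sub i ⊓ X.sub j, X.op 1 u ∈ X.sub i ⊓ X.sub j :=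
    fun i j u hu => ⟨h.st i u hu.1, h.st j u hu.2⟩
  -- case 1
  by_cases c1 : ∃ z ∈ X.sub 0 ⊓ X.sub 2, z ≠ 0
  · left
    obtain ⟨c, x, hx, hx0, hc⟩ := hom _ (inter 0 2) c1
    refine line (X.sub 1) ![true, false, true, true] (h.st 1) x (fun h1 => hx0 (hdis x hx.1 h1)) c hc ?_ ?_
    · exact forall_fin_four (fun _ => hx.1) (by simp) (fun _ => hx.2) (fun _ => h.IK hx.2)
    · exact forall_fin_four (by simp) (by simp) (by simp) (by simp)
  by_cases c1' : ∃ z ∈ X.sub 1 ⊓ X.sub 2, z ≠ 0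
  · left
    obtain ⟨c, x, hx, hx0, hc⟩ := hom _ (inter 1 2) c1'
    refine line (X.sub 0) ![false, true, true, true] (h.st 0) x (fun h1 => hx0 (hdis x h1 hx.1)) c hc ?_ ?_
    · exact forall_fin_four (by simp) (fun _ => hx.1) (fun _ => hx.2) (fun _ => h.IK hx.2)
    · exact forall_fin_four (by simp) (by simp) (by simp) (by simp)
  push Not at c1 c1'
  -- case 2
  by_cases c2 : ∃ z ∈ X.sub 2 ⊓ (X.sub 3).comap p, z ≠ 0
  · right
    obtain ⟨c, x, hx, hx0, hc⟩ := hom (X.sub 2 ⊓ (X.sub 3).comap p) (fun u hu => ⟨h.st 2 u hu.1, by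
      have := h.st 3 _ hu.2; rw [← pe] at this; exact this⟩) c2
    refine ⟨c, 2, diag_of X h hT p pe p0 p1 pA pB (X.sub 2) (h.st 2) x hx.1 ?_ c hc 2 (by simp)
      (by simp) (fun _ => ⟨hx.1, hx.2, le_rfl⟩)⟩
    intro h2
    have e0 := c1 _ ⟨p0 x, h2⟩
    exact hx0 (c1' x ⟨by simpa [e0] using p1 x, hx.1⟩)
  push Not at c2
  -- case 3
  by_cases c3 : ∃ z ∈ X.sub 0 ⊓ X.sub 3, z ≠ 0
  · left
    obtain ⟨c, x, hx, hx0, hc⟩ := hom _ (inter 0 3) c3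
    refine line (X.sub 1 ⊔ X.sub 2) ![true, false, false, true] (stable_sup (h.st 1) (h.st 2)) x
      (fun h1 => ?_) c hc ?_ ?_
    · obtain ⟨y, hy, i, hi, rfl⟩ := Submodule.mem_sup.1 h1
      have e1 : p i = y + i := by
        have := pA _ hx.1; rwa [map_add, pB y hy, zero_add] at this
      have e2 := c2 i ⟨hi, by show p i ∈ X.sub 3; rw [e1]; exact hx.2⟩
      subst e2
      exact hx0 (hdis _ hx.1 (by simpa using hy))
    · exact forall_fin_four (fun _ => hx.1) (by simp) (by simp) (fun _ => hx.2)
    · exact forall_fin_four (by simp) (fun _ => le_sup_left) (fun _ => le_sup_right) (by simp)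
  by_cases c3' : ∃ z ∈ X.sub 1 ⊓ X.sub 3, z ≠ 0
  · left
    obtain ⟨c, x, hx, hx0, hc⟩ := hom _ (inter 1 3) c3'
    refine line (X.sub 0 ⊔ X.sub 2) ![false, true, false, true] (stable_sup (h.st 0) (h.st 2)) x
      (fun h1 => ?_) c hc ?_ ?_
    · obtain ⟨y, hy, i, hi, rfl⟩ := Submodule.mem_sup.1 h1
      have e1 : p i = -y := by
        have := pB _ hx.1; rw [map_add, pA y hy] at this; exact eq_neg_of_add_eq_zero_right this
      have e2 := c2 i ⟨hi, by
        show p i ∈ X.sub 3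
        have : p i = i - (y + i) := by rw [e1]; abel
        rw [this]; exact Submodule.sub_mem _ (h.IK hi) hx.2⟩
      subst e2
      exact hx0 (hdis _ (by simpa using hy) hx.1)
    · exact forall_fin_four (by simp) (fun _ => hx.1) (by simp) (fun _ => hx.2)
    · exact forall_fin_four (fun _ => le_sup_left) (by simp) (fun _ => le_sup_right) (by simp)
  push Not at c3 c3'
  have hK : ∀ x ∈ X.sub 3, x ≠ 0 → p x ∉ X.sub 3 := by
    intro x hx hx0 hp
    have e0 := c3 _ ⟨p0 x, hp⟩
    exact hx0 (c3' x ⟨by simpa [e0] using p1 x, hx⟩)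
  by_cases c4 : ∃ z ∈ X.sub 2, z ≠ 0
  · right
    obtain ⟨c, x, hx, hx0, hc⟩ := hom _ (h.st 2) c4
    exact ⟨c, 0, diag_of X h hT p pe p0 p1 pA pB (X.sub 3) (h.st 3) x (h.IK hx) (hK x (h.IK hx) hx0) c hc 0
      (fun _ => ⟨hx, le_rfl⟩) (by simp) (by simp)⟩
  push Not at c4
  have b4 : X.sub 2 = ⊥ := by rw [eq_bot_iff]; exact fun x hx => c4 x hx
  by_cases c5 : ∃ z ∈ X.sub 3, z ≠ 0
  · right
    obtain ⟨c, x, hx, hx0, hc⟩ := hom _ (h.st 3) c5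
    exact ⟨c, 1, diag_of X h hT p pe p0 p1 pA pB (X.sub 3) (h.st 3) x hx (hK x hx hx0) c hc 1
      (by simp) (fun _ => ⟨b4, le_rfl, hx⟩) (by simp)⟩
  push Not at c5
  have b5 : X.sub 3 = ⊥ := by rw [eq_bot_iff]; exact fun x hx => c5 x hx
  left
  obtain ⟨z, hz⟩ := h.nt
  by_cases c6 : ∃ z ∈ X.sub 0, z ≠ 0
  · obtain ⟨c, x, hx, hx0, hc⟩ := hom _ (h.st 0) c6
    refine line (X.sub 1) ![true, false, false, false] (h.st 1) x (fun h1 => hx0 (hdis x hx h1)) c hc ?_ ?_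
    · exact forall_fin_four (fun _ => hx) (by simp) (by simp) (by simp)
    · exact forall_fin_four (by simp) (by simp) (by simp [b4]) (by simp [b5])
  · push Not at c6
    have hz1 : z ∈ X.sub 1 := by have := p1 z; rwa [c6 _ (p0 z), sub_zero] at this
    obtain ⟨c, x, hx, hx0, hc⟩ := hom _ (h.st 1) ⟨z, hz1, hz⟩
    refine line (X.sub 0) ![false, true, false, false] (h.st 0) x (fun h1 => hx0 (hdis x h1 hx)) c hc ?_ ?_
    · exact forall_fin_four (by simp) (fun _ => hx) (by simp) (by simp)
    · exact forall_fin_four (by simp) (by simp) (by simp [b4]) (by simp [b5])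

theorem finL_good2 : FinL (Good2 (k := k) : Ob.{v} k 2 4 → Prop) := by
  have f1 : FinL (fun X : Ob.{v} k 2 4 => ∃ i : Bool × (Fin 4 → Bool), LineP ![false, i.1] i.2 X) :=
    ⟨Bool × (Fin 4 → Bool), inferInstance, fun i X => LineP ![false, i.1] i.2 X, fun X h => h, fun i X Y h h' => h.linked h'⟩
  have f2 : FinL (fun X : Ob.{v} k 2 4 => ∃ i : Bool × Fin 3, DiagP i.1 i.2 X) :=
    ⟨Bool × Fin 3, inferInstance, fun i X => DiagP i.1 i.2 X, fun X h => h, fun i X Y h h' => h.linked h'⟩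
  have f3 : FinL (fun X : Ob.{v} k 2 4 => ∃ i : Bool × (Fin 4 → Bool), ArrP i.1 i.2 X) :=
    ⟨Bool × (Fin 4 → Bool), inferInstance, fun i X => ArrP i.1 i.2 X, fun X h => h, fun i X Y h h' => h.linked h'⟩
  refine ((f1.or f2).or f3).mono fun X h => ?_
  by_cases hT : ∀ u, X.op 0 u = 0
  · left
    rcases exists_split X h hT with ⟨c, t, h⟩ | ⟨c, d, h⟩
    · left; exact ⟨(c, t), h⟩
    · right; exact ⟨(c, d), h⟩
  · right
    push Not at hT
    obtain ⟨c, t, h⟩ := exists_arr X h hT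
    exact ⟨(c, t), h⟩

end SN

namespace SN
universe v
variable {k : Type} [Field k]

theorem FinL.stage2 {a b a' b' : ℕ} (good : Ob.{v} k a b → Prop) (F : ∀ X, good X → Ob.{v} k a' b')
    (good' : Ob.{v} k a' b' → Prop) (hg : ∀ X h, good' (F X h))
    (Ind : ∀ (X Y : Ob.{v} k a b) (hX : good X) (hY : good Y), (X.V →ₗ[k] Y.V) →
      ((F X hX).V →ₗ[k] (F Y hY).V) → Prop)
    (hnil : ∀ X Y hX hY f g φ ψ, Ind X Y hX hY f φ → Ind Y X hY hX g ψ →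
      IsNilpotent (g ∘ₗ f : Module.End k X.V) → IsNilpotent (ψ ∘ₗ φ : Module.End k (F X hX).V))
    (lift : ∀ X Y hX hY φ, IsHom (F X hX) (F Y hY) φ → ∃ f, IsHom X Y f ∧ Ind X Y hX hY f φ)
    (h : FinL good') : FinL good := by
  obtain ⟨τ, i, P, hP, hP'⟩ := h
  refine ⟨τ, i, fun t X => ∃ h : good X, P t (F X h), fun X hX => ?_, ?_⟩
  · obtain ⟨t, ht⟩ := hP _ (hg X hX); exact ⟨t, hX, ht⟩
  · rintro t X Y ⟨hX, hX'⟩ ⟨hY, hY'⟩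
    obtain ⟨φ, ψ, h1, h2, h3⟩ := hP' t _ _ hX' hY'
    obtain ⟨f, f1, f2⟩ := lift X Y hX hY φ h1
    obtain ⟨g, g1, g2⟩ := lift Y X hY hX ψ h2
    exact ⟨f, g, f1, g1, fun hn => h3 (hnil X Y hX hY f g φ ψ f2 g2 hn)⟩

section SQ
variable {V V' V'' : Type v} [AddCommGroup V] [Module k V] [AddCommGroup V'] [Module k V']
  [AddCommGroup V''] [Module k V'']

/-- subquotients -/
abbrev SQ (S B : Submodule k V) : Type v := ↥S ⧸ B.comap S.subtype

namespace SQ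
variable {S B : Submodule k V} {S' B' : Submodule k V'}

/-- class of an element -/
def mk (S B : Submodule k V) (u : V) (hu : u ∈ S) : SQ S B := Submodule.Quotient.mk ⟨u, hu⟩

theorem surj (q : SQ S B) : ∃ u, ∃ hu : u ∈ S, q = mk S B u hu := by
  obtain ⟨⟨u, hu⟩, rfl⟩ := Submodule.Quotient.mk_surjective _ q
  exact ⟨u, hu, rfl⟩

theorem mk_eq {u v : V} (hu : u ∈ S) (hv : v ∈ S) : mk S B u hu = mk S B v hv ↔ u - v ∈ B := by
  unfold mk; rw [Submodule.Quotient.eq]; rfl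

theorem mk_eq_zero {u : V} (hu : u ∈ S) : mk S B u hu = 0 ↔ u ∈ B := by
  unfold mk; rw [Submodule.Quotient.mk_eq_zero]; rfl

theorem mk_add {u v : V} (hu : u ∈ S) (hv : v ∈ S) :
    mk S B u hu + mk S B v hv = mk S B (u + v) (S.add_mem hu hv) := rfl

theorem mk_smul (c : k) {u : V} (hu : u ∈ S) :
    c • mk S B u hu = mk S B (c • u) (S.smul_mem c hu) := rfl

/-- induced map -/
def map (S B : Submodule k V) (S' B' : Submodule k V') (f : V →ₗ[k] V') (hS : ∀ u ∈ S, f u ∈ S')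
    (hB : ∀ u ∈ S, u ∈ B → f u ∈ B') : SQ S B →ₗ[k] SQ S' B' :=
  Submodule.mapQ _ _ (f.restrict hS) (fun u hu => hB u.1 u.2 hu)

theorem map_mk (f : V →ₗ[k] V') (hS : ∀ u ∈ S, f u ∈ S')
    (hB : ∀ u ∈ S, u ∈ B → f u ∈ B') (u : V) (hu : u ∈ S) :
    map S B S' B' f hS hB (mk S B u hu) = mk S' B' (f u) (hS u hu) := rfl

/-- induced subspaces -/
def sub (S B A : Submodule k V) : Submodule k (SQ S B) := (A.comap S.subtype).map (Submodule.mkQ _)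

theorem mk_mem_sub' {A : Submodule k V} {u : V} (hu : u ∈ S) :
    mk S B u hu ∈ sub S B A ↔ ∃ v ∈ A, v ∈ S ∧ u - v ∈ B := by
  unfold sub; rw [Submodule.mem_map]
  constructor
  · rintro ⟨⟨v, hv⟩, hA, h⟩
    exact ⟨v, hA, hv, (mk_eq (B := B) hu hv).1 h.symm⟩
  · rintro ⟨v, hA, hv, h⟩
    exact ⟨⟨v, hv⟩, hA, ((mk_eq hu hv).2 h).symm⟩

theorem mk_mem_sub {A : Submodule k V} (hB : ∀ u ∈ S, u ∈ B → u ∈ A) {u : V} (hu : u ∈ S) :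
    mk S B u hu ∈ sub S B A ↔ u ∈ A := by
  rw [mk_mem_sub']
  constructor
  · rintro ⟨v, hA, hv, h⟩
    have := A.add_mem (hB _ (S.sub_mem hu hv) h) hA
    rwa [sub_add_cancel] at this
  · intro h; exact ⟨u, h, hu, by simp⟩

/-- the relation attached to a map of subquotients -/
def Rel (φ : SQ S B →ₗ[k] SQ S' B') (u : V) (u' : V') : Prop :=
  ∃ hu hu', φ (mk S B u hu) = mk S' B' u' hu'

variable {φ : SQ S B →ₗ[k] SQ S' B'}

theorem Rel.zero : Rel φ 0 0 := by
  refine ⟨S.zero_mem, S'.zero_mem, ?_⟩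
  rw [(mk_eq_zero _).2 B.zero_mem, (mk_eq_zero _).2 B'.zero_mem, map_zero]

theorem Rel.add {u v : V} {u' v' : V'} (h : Rel φ u u') (h' : Rel φ v v') : Rel φ (u + v) (u' + v') := by
  obtain ⟨a, b, h⟩ := h
  obtain ⟨a', b', h'⟩ := h'
  exact ⟨_, _, by rw [← mk_add a a', map_add, h, h', mk_add]⟩

theorem Rel.smul (c : k) {u : V} {u' : V'} (h : Rel φ u u') : Rel φ (c • u) (c • u') := by
  obtain ⟨a, b, h⟩ := h
  exact ⟨_, _, by rw [← mk_smul c a, map_smul, h, mk_smul]⟩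

theorem Rel.sub {u v : V} {u' v' : V'} (h : Rel φ u u') (h' : Rel φ v v') : Rel φ (u - v) (u' - v') := by
  have := h.add (h'.smul (-1 : k))
  simpa [sub_eq_add_neg] using this

theorem Rel.ofB {u : V} {u' : V'} (hu : u ∈ S) (hu' : u' ∈ S') (h : u ∈ B) (h' : u' ∈ B') : Rel φ u u' :=
  ⟨hu, hu', by rw [(mk_eq_zero _).2 h, (mk_eq_zero _).2 h', map_zero]⟩

theorem Rel.zer {u : V} {u' : V'} (hu : u ∈ B) (h : Rel φ u u') : u' ∈ B' := by
  obtain ⟨a, b, h⟩ := h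
  rw [(mk_eq_zero _).2 hu, map_zero] at h
  exact (mk_eq_zero _).1 h.symm

theorem Rel.exists (φ : SQ S B →ₗ[k] SQ S' B') {u : V} (hu : u ∈ S) : ∃ u', Rel φ u u' := by
  obtain ⟨u', hu', h⟩ := surj (φ (mk S B u hu))
  exact ⟨u', hu, hu', h⟩

/-- a relation through subspaces -/
theorem Rel.exists_mem {A : Submodule k V} {A' : Submodule k V'} 
    (h : ∀ q ∈ SQ.sub S B A, φ q ∈ SQ.sub S' B' A') {u : V} (hu : u ∈ S) (hA : u ∈ A) :
    ∃ u' ∈ A', Rel φ u u' := by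
  have h1 := h (mk S B u hu) ((mk_mem_sub' hu).2 ⟨u, hA, hu, by simp⟩)
  obtain ⟨u', hu', e⟩ := surj (φ (mk S B u hu))
  rw [e, mk_mem_sub'] at h1
  obtain ⟨v, hv, hv', hB⟩ := h1
  exact ⟨v, hv, hu, hv', by rw [e]; exact (mk_eq _ _).2 hB⟩

theorem Rel.mem {A : Submodule k V} {A' : Submodule k V'} (hB' : ∀ u ∈ S', u ∈ B' → u ∈ A')
    (h : ∀ q ∈ SQ.sub S B A, φ q ∈ SQ.sub S' B' A') {u : V} {u' : V'} (hA : u ∈ A) (r : Rel φ u u') :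
    u' ∈ A' := by
  obtain ⟨hu, hu', e⟩ := r
  have h1 := h (mk S B u hu) ((mk_mem_sub' hu).2 ⟨u, hA, hu, by simp⟩)
  rw [e] at h1
  exact (mk_mem_sub hB' hu').1 h1

theorem Rel.apply {f : V →ₗ[k] V} {f' : V' →ₗ[k] V'} {hS hB hS' hB'}
    (h : ∀ q, φ (map S B S B f hS hB q) = map S' B' S' B' f' hS' hB' (φ q)) {u : V} {u' : V'}
    (r : Rel φ u u') : Rel φ (f u) (f' u') := by
  obtain ⟨hu, hu', e⟩ := r
  exact ⟨hS u hu, hS' u' hu', by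
    rw [← map_mk f hS hB u hu, h, e, map_mk]⟩

theorem nil {f : V →ₗ[k] V'} {g : V' →ₗ[k] V} {ψ : SQ S' B' →ₗ[k] SQ S B}
    (hf : ∀ u ∈ S, Rel φ u (f u)) (hg : ∀ u ∈ S', Rel ψ u (g u))
    (h : IsNilpotent (g ∘ₗ f : Module.End k V)) : IsNilpotent (ψ ∘ₗ φ : Module.End k (SQ S B)) := by
  obtain ⟨n, hn⟩ := h
  refine ⟨n, ?_⟩
  have key : ∀ n, ∀ u ∈ S, Rel ((ψ ∘ₗ φ : Module.End k (SQ S B)) ^ n) u (((g ∘ₗ f : Module.End k V) ^ n) u) := by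
    intro n; induction n with
    | zero => intro u hu; exact ⟨hu, hu, rfl⟩
    | succ n ih =>
      intro u hu
      obtain ⟨a, b, e⟩ := ih u hu
      obtain ⟨a', b', e'⟩ := hf _ b
      obtain ⟨a'', b'', e''⟩ := hg _ b'
      refine ⟨hu, by rw [pow_succ_apply]; exact b'', ?_⟩
      rw [pow_succ_apply, e, LinearMap.comp_apply, e', e'']
      simp only [pow_succ_apply]; rfl
  ext ⟨u, hu⟩
  obtain ⟨a, b, e⟩ := key n u hu
  refine e.trans ((mk_eq_zero b).2 ?_)
  rw [hn]; exact B.zero_mem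

end SQ
end SQ

/-- the middle category -/
structure Good1 (X : Ob.{v} k 2 2) : Prop where
  T4 : ∀ u, X.op 0 (X.op 0 (X.op 0 (X.op 0 u))) = 0
  ee : ∀ u, X.op 1 (X.op 1 u) = X.op 1 u
  Te : ∀ u, X.op 0 (X.op 1 u) + X.op 1 (X.op 0 u) = X.op 0 u
  st : ∀ i, ∀ u ∈ X.sub i, X.op 1 u ∈ X.sub i
  I0 : ∀ u, X.op 0 (X.op 0 u) ∈ X.sub 0
  IK : X.sub 0 ≤ X.sub 1
  K0 : ∀ u ∈ X.sub 1, X.op 0 (X.op 0 u) = 0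
  nt : ∃ u : X.V, u ≠ 0

theorem Good1.Te' {X : Ob.{v} k 2 2} (h : Good1 X) (u : X.V) :
    X.op 0 (X.op 1 u) = X.op 0 u - X.op 1 (X.op 0 u) := eq_sub_of_add_eq (h.Te u)

/-- first type in the middle category -/
def TopP (c : Bool) (X : Ob.{v} k 2 2) : Prop :=
  Good1 X ∧ ∃ x, X.op 0 (X.op 0 (X.op 0 x)) ≠ 0 ∧ X.op 1 x = sg k c • x

theorem TopP.linked {c : Bool} {X Y : Ob.{v} k 2 2}
    (hX : TopP c X) (hY : TopP c Y) : Linked X Y := by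
  have dual : ∀ X : Ob.{v} k 2 2, TopP c X → ∃ (x : X.V) (l : X.V →ₗ[k] k),
      l (X.op 0 (X.op 0 (X.op 0 x))) = 1 ∧ (∀ u, l (X.op 1 u) = (1 - sg k c) * l u) ∧
      X.op 1 x = sg k c • x := by
    rintro X ⟨h, x, hx, hc⟩
    obtain ⟨l, l1, -, l3⟩ := exists_homog_dual (X.op 1) h.ee ⊥ (by simp) (X.op 0 (X.op 0 (X.op 0 x)))
      (by simpa using hx) (!c) (by
        have e2 : ∀ x, X.op 1 (X.op 0 x) = X.op 0 x - X.op 0 (X.op 1 x) :=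
          fun x => eq_sub_of_add_eq' (h.Te x)
        simp only [e2, map_sub, hc, map_smul]
        cases c <;> simp [sg])
    exact ⟨x, l, l1, fun u => by rw [l3]; cases c <;> simp [sg], hc⟩
  have key : ∀ X Y : Ob.{v} k 2 2, Good1 X → Good1 Y → ∀ (l : X.V →ₗ[k] k) (y : Y.V),
      (∀ u, l (X.op 1 u) = (1 - sg k c) * l u) → Y.op 1 y = sg k c • y →
      ∃ f, IsHom X Y f ∧ ∀ u, f (X.op 0 (X.op 0 (X.op 0 u))) =
        l (X.op 0 (X.op 0 (X.op 0 u))) • Y.op 0 (Y.op 0 (Y.op 0 y)) := by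
    intro X Y hX hY l y hl hy
    have e2 : ∀ x, Y.op 1 (Y.op 0 x) = Y.op 0 x - Y.op 0 (Y.op 1 x) :=
          fun x => eq_sub_of_add_eq' (hY.Te x)
    let f : X.V →ₗ[k] Y.V := (l ∘ₗ X.op 0 ∘ₗ X.op 0 ∘ₗ X.op 0).smulRight y +
      (l ∘ₗ X.op 0 ∘ₗ X.op 0).smulRight (Y.op 0 y) + (l ∘ₗ X.op 0).smulRight (Y.op 0 (Y.op 0 y)) +
      l.smulRight (Y.op 0 (Y.op 0 (Y.op 0 y)))
    have hf : ∀ u, f u = l (X.op 0 (X.op 0 (X.op 0 u))) • y + l (X.op 0 (X.op 0 u)) • Y.op 0 y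
        + l (X.op 0 u) • Y.op 0 (Y.op 0 y) + l u • Y.op 0 (Y.op 0 (Y.op 0 y)) := fun u => rfl
    have hK : ∀ u ∈ X.sub 1, f u ∈ Y.sub 0 := by
      intro u hu
      rw [hf, hX.K0 u hu]
      simp only [map_zero, zero_smul, zero_add]
      exact Submodule.add_mem _ (Submodule.smul_mem _ _ (hY.I0 _)) (Submodule.smul_mem _ _ (hY.I0 _))
    refine ⟨f, ⟨?_, ?_⟩, ?_⟩
    · rw [Fin.forall_fin_two]
      refine ⟨fun u => ?_, fun u => ?_⟩
      · simp only [hf, hX.T4, hY.T4, map_add, map_smul, map_zero, zero_smul, smul_zero]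
        abel
      · simp only [hf, hX.Te', e2, map_add, map_smul, map_sub, hl, hy]
        module
    · rw [Fin.forall_fin_two]
      exact ⟨fun u hu => hK u (hX.IK hu), fun u hu => hY.IK (hK u hu)⟩
    · intro u
      simp only [hf, hX.T4, map_zero, zero_smul, zero_add]
  obtain ⟨x, l, a1, a2, a3⟩ := dual X hX
  obtain ⟨y, m, b1, b2, b3⟩ := dual Y hY
  obtain ⟨f, f1, f2⟩ := key X Y hX.1 hY.1 l y a2 b3
  obtain ⟨g, g1, g2⟩ := key Y X hY.1 hX.1 m x b2 a3
  refine ⟨f, g, f1, g1, ?_⟩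
  refine not_nil_of_fix _ (X.op 0 (X.op 0 (X.op 0 x))) (fun h => ?_) ?_
  · rw [h, map_zero] at a1; exact zero_ne_one a1
  · rw [LinearMap.comp_apply, f2, a1, one_smul, g2, b1, one_smul]

end SN

namespace SN
universe v
variable {k : Type} [Field k]

/-- the conditions for the second functor -/
structure Good1' (X : Ob.{v} k 2 2) : Prop extends Good1 X where
  T3 : ∀ u, X.op 0 (X.op 0 (X.op 0 u)) = 0

namespace G1
variable (X : Ob.{v} k 2 2)

/-- kernel of the square -/
def S : Submodule k X.V := LinearMap.ker (X.op 0 ∘ₗ X.op 0)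
/-- image of the square -/
def B : Submodule k X.V := LinearMap.range (X.op 0 ∘ₗ X.op 0)

variable {X}

theorem memS {u : X.V} : u ∈ S X ↔ X.op 0 (X.op 0 u) = 0 := Iff.rfl
theorem memB {u : X.V} : u ∈ B X ↔ ∃ y, X.op 0 (X.op 0 y) = u := Iff.rfl

theorem TS (u : X.V) (hu : u ∈ S X) : X.op 0 u ∈ S X := by
  rw [memS] at *; rw [hu, map_zero]

theorem TB (u : X.V) (hu : u ∈ B X) : X.op 0 u ∈ B X := by
  obtain ⟨y, rfl⟩ := hu; exact ⟨X.op 0 y, rfl⟩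

theorem TTe (h : Good1 X) (u : X.V) : X.op 0 (X.op 0 (X.op 1 u)) = X.op 1 (X.op 0 (X.op 0 u)) := by
  simp [h.Te']

theorem eS (h : Good1 X) (u : X.V) (hu : u ∈ S X) : X.op 1 u ∈ S X := by
  rw [memS] at *; rw [TTe h, hu, map_zero]

theorem eB (h : Good1 X) (u : X.V) (hu : u ∈ B X) : X.op 1 u ∈ B X := by
  obtain ⟨y, rfl⟩ := hu; exact ⟨X.op 1 y, TTe h y⟩

/-- the functor -/
def F (X : Ob.{v} k 2 2) (h : Good1' X) : Ob.{v} k 2 4 where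
  V := SQ (S X) (B X)
  op := ![SQ.map _ _ _ _ (X.op 0) TS (fun u _ => TB u),
    SQ.map _ _ _ _ (X.op 1) (eS h.1) (fun u _ => eB h.1 u)]
  sub := ![SQ.sub _ _ (LinearMap.range (X.op 0)), SQ.sub _ _ (LinearMap.ker (X.op 0)),
    SQ.sub _ _ (X.sub 0), SQ.sub _ _ (X.sub 1)]

theorem BX (u : X.V) (_ : u ∈ S X) (hu : u ∈ B X) : u ∈ LinearMap.range (X.op 0) := by
  obtain ⟨y, rfl⟩ := hu; exact ⟨_, rfl⟩

theorem BY (h : Good1' X) (u : X.V) (_ : u ∈ S X) (hu : u ∈ B X) : u ∈ LinearMap.ker (X.op 0) := by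
  obtain ⟨y, rfl⟩ := hu; exact h.T3 y

theorem BI (h : Good1' X) (u : X.V) (_ : u ∈ S X) (hu : u ∈ B X) : u ∈ X.sub 0 := by
  obtain ⟨y, rfl⟩ := hu; exact h.I0 y

theorem BK (h : Good1' X) (u : X.V) (_ : u ∈ S X) (hu : u ∈ B X) : u ∈ X.sub 1 := by
  obtain ⟨y, rfl⟩ := hu; exact h.IK (h.I0 y)

theorem goodF (X : Ob.{v} k 2 2) (h : Good1' X) : Good2 (F X h) where
  TT q := by
    obtain ⟨u, hu, rfl⟩ := SQ.surj q
    exact (SQ.mk_eq_zero _).2 ⟨u, rfl⟩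
  ee q := by
    obtain ⟨u, hu, rfl⟩ := SQ.surj q
    refine (SQ.mk_eq (S := S X) _ _).2 ?_
    show X.op 1 (X.op 1 u) - X.op 1 u ∈ B X
    rw [h.ee, sub_self]; exact Submodule.zero_mem _
  Te q := by
    obtain ⟨u, hu, rfl⟩ := SQ.surj q
    refine (SQ.mk_eq (S := S X) (u := X.op 0 (X.op 1 u) + X.op 1 (X.op 0 u)) (Submodule.add_mem _ (TS _ (eS h.1 _ hu)) (eS h.1 _ (TS _ hu))) _).2 ?_
    show X.op 0 (X.op 1 u) + X.op 1 (X.op 0 u) - X.op 0 u ∈ B X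
    rw [h.Te, sub_self]; exact Submodule.zero_mem _
  st i q hq := by
    obtain ⟨u, hu, rfl⟩ := SQ.surj q
    have key : ∀ A : Submodule k X.V, (∀ u ∈ A, X.op 1 u ∈ A) → (SQ.mk (S X) (B X) u hu ∈ SQ.sub _ _ A) →
        SQ.mk (S X) (B X) (X.op 1 u) (eS h.1 _ hu) ∈ SQ.sub _ _ A := by
      intro A hA h'
      rw [SQ.mk_mem_sub'] at *
      obtain ⟨v, h1, h2, h3⟩ := h'
      exact ⟨_, hA v h1, eS h.1 v h2, by rw [← map_sub]; exact eB h.1 _ h3⟩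
    revert i
    refine forall_fin_four ?_ ?_ ?_ ?_
    · refine key _ ?_
      rintro _ ⟨y, rfl⟩
      exact ⟨y - X.op 1 y, by rw [map_sub, h.Te']; abel⟩
    · refine key _ ?_
      intro u hu
      rw [LinearMap.mem_ker] at *
      rw [h.Te', hu]; simp
    · exact key _ (h.st 0)
    · exact key _ (h.st 1)
  ker q hq := by
    obtain ⟨u, hu, rfl⟩ := SQ.surj q
    obtain ⟨y, hy⟩ := (SQ.mk_eq_zero (S := S X) (B := B X) (TS u hu)).1 hq
    have hy' : X.op 0 (X.op 0 y) = X.op 0 u := hy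
    have m1 : X.op 0 y ∈ S X := by rw [memS, hy', memS.1 hu]
    have e : SQ.mk (S X) (B X) u hu = SQ.mk (S X) (B X) (X.op 0 y) m1 +
        SQ.mk (S X) (B X) (u - X.op 0 y) (Submodule.sub_mem _ hu m1) := by
      rw [SQ.mk_add, SQ.mk_eq]; simp
    rw [e]
    refine Submodule.add_mem_sup ?_ ?_
    · exact (SQ.mk_mem_sub BX _).2 ⟨y, rfl⟩
    · refine (SQ.mk_mem_sub (BY h) _).2 ?_
      rw [LinearMap.mem_ker, map_sub, hy', sub_self]
  ker0 q hq := by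
    obtain ⟨u, hu, rfl⟩ := SQ.surj q
    obtain ⟨y, rfl⟩ := (SQ.mk_mem_sub BX hu).1 hq
    exact (SQ.mk_eq_zero _).2 ⟨y, rfl⟩
  ker1 q hq := by
    obtain ⟨u, hu, rfl⟩ := SQ.surj q
    have := (SQ.mk_mem_sub (BY h) hu).1 hq
    refine (SQ.mk_eq_zero (S := S X) (B := B X) _).2 ?_
    show X.op 0 u ∈ B X
    rw [LinearMap.mem_ker.1 this]; exact Submodule.zero_mem _
  im q hq hq' := by
    obtain ⟨u, hu, rfl⟩ := SQ.surj q
    obtain ⟨y, rfl⟩ := (SQ.mk_mem_sub BX hu).1 hq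
    have := (SQ.mk_mem_sub (BY h) hu).1 hq'
    exact ⟨SQ.mk _ _ y this, rfl⟩
  im0 q := by
    obtain ⟨u, hu, rfl⟩ := SQ.surj q
    exact (SQ.mk_mem_sub BX _).2 ⟨u, rfl⟩
  im1 q := by
    obtain ⟨u, hu, rfl⟩ := SQ.surj q
    exact (SQ.mk_mem_sub (BY h) _).2 hu
  IK q hq := by
    obtain ⟨u, hu, rfl⟩ := SQ.surj q
    exact (SQ.mk_mem_sub (BK h) _).2 (h.IK ((SQ.mk_mem_sub (BI h) hu).1 hq))
  nt := by
    by_contra hc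
    push Not at hc
    have h1 : ∀ u ∈ S X, u ∈ B X := fun u hu => (SQ.mk_eq_zero hu).1 (hc (SQ.mk _ _ u hu))
    have h2 : ∀ u, u ∈ S X := by
      intro u
      obtain ⟨y, hy⟩ := h1 (X.op 0 u) (h.T3 u)
      have hy' : X.op 0 (X.op 0 y) = X.op 0 u := hy
      rw [memS, ← hy', h.T3]
    obtain ⟨u, hu⟩ := h.nt
    obtain ⟨y, rfl⟩ := h1 u (h2 u)
    exact hu (h2 y)

theorem lift (X Y : Ob.{v} k 2 2) (hX : Good1' X) (hY : Good1' Y) (φ : SQ (S X) (B X) →ₗ[k] SQ (S Y) (B Y))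
    (hφ : IsHom (F X hX) (F Y hY) φ) :
    ∃ f, IsHom X Y f ∧ ∀ u ∈ S X, SQ.Rel φ u (f u) := by
  have cT : ∀ u u', SQ.Rel φ u u' → SQ.Rel φ (X.op 0 u) (Y.op 0 u') := fun u u' r => 
    r.apply (hS := TS) (hB := fun u _ => TB u) (hS' := TS) (hB' := fun u _ => TB u) (hφ.1 0)
  have ce : ∀ u u', SQ.Rel φ u u' → SQ.Rel φ (X.op 1 u) (Y.op 1 u') := fun u u' r => 
    r.apply (hS := eS hX.1) (hB := fun u _ => eB hX.1 u) (hS' := eS hY.1) (hB' := fun u _ => eB hY.1 u) (hφ.1 1)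
  have hT3 : X.op 0 ^ 3 = 0 := by ext u; exact hX.T3 u
  have hT3' : Y.op 0 ^ 3 = 0 := by ext u; exact hY.T3 u
  obtain ⟨ι, w, n, w0, gen, ext⟩ := jordan _ X.V (X.op 0) ⟨3, hT3⟩ rfl
  have zB : ∀ u, X.op 0 (X.op 0 u) ∈ S X := fun u => TS _ (hX.T3 u)
  have zB' : ∀ u, Y.op 0 (Y.op 0 u) ∈ S Y := fun u => TS _ (hY.T3 u)
  have ch : ∀ j, ∃ w' : Y.V, (Y.op 0 ^ n j) w' = 0 ∧ ∀ a, a < n j → n j ≤ a + 2 →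
      SQ.Rel φ ((X.op 0 ^ a) (w j)) ((Y.op 0 ^ a) w') := by
    intro j
    have hw := w0 j
    rcases hn : n j with _ | _ | _ | m
    · exact ⟨0, by simp, by simp⟩
    · rw [hn] at hw
      have hw1 : X.op 0 (w j) = 0 := hw
      obtain ⟨u', h1, h2⟩ := SQ.Rel.exists_mem (hφ.2 1) (u := w j) (by rw [memS, hw1, map_zero]) hw1
      refine ⟨u', h1, fun a ha _ => ?_⟩
      obtain rfl : a = 0 := by omega
      exact h2
    · rw [hn] at hw
      have hw1 : X.op 0 (X.op 0 (w j)) = 0 := hw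
      obtain ⟨u', h1⟩ := SQ.Rel.exists φ (u := w j) hw1
      obtain ⟨hu, hu', -⟩ := id h1
      refine ⟨u', hu', fun a ha _ => ?_⟩
      obtain rfl | rfl : a = 0 ∨ a = 1 := by omega
      · exact h1
      · exact cT _ _ h1
    · obtain ⟨u', ⟨y, rfl⟩, h2⟩ := SQ.Rel.exists_mem (hφ.2 0) (u := X.op 0 (w j)) (hX.T3 _) ⟨w j, rfl⟩
      refine ⟨y, ?_, fun a ha hb => ?_⟩
      · rw [show m + 1 + 1 + 1 = m + 3 from rfl, pow_add, hT3']; simp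
      · by_cases h1 : a = 1
        · subst h1; exact h2
        · obtain ⟨b, rfl⟩ : ∃ b, a = b + 2 := ⟨a - 2, by omega⟩
          simp only [pow_succ_apply]
          exact SQ.Rel.ofB (zB _) (zB' _) ⟨_, rfl⟩ ⟨_, rfl⟩
  choose w' hw' hr using ch
  obtain ⟨ψ, p1, p2⟩ := ext _ (Y.op 0) w' hw'
  have p3 : ∀ a u, ψ ((X.op 0 ^ a) u) = (Y.op 0 ^ a) (ψ u) := by
    intro a u; induction a with
    | zero => rfl
    | succ a ih => rw [pow_succ_apply, p1, ih, pow_succ_apply]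
  have rel : ∀ u ∈ S X, SQ.Rel φ u (ψ u) := by
    intro u hu
    have hu2 := gen 2 u hu
    refine Submodule.span_induction (p := fun u _ => SQ.Rel φ u (ψ u)) ?_ ?_ ?_ ?_ hu2
    · rintro _ ⟨j, a, rfl, h1, h2⟩
      rw [p3, p2]; exact hr j a h1 h2
    · rw [map_zero]; exact SQ.Rel.zero
    · intro x y _ _ h1 h2; rw [map_add]; exact h1.add h2
    · intro c x _ h1; rw [map_smul]; exact h1.smul c
  let f : X.V →ₗ[k] Y.V := Y.op 1 ∘ₗ ψ ∘ₗ X.op 1 +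
    (LinearMap.id - Y.op 1) ∘ₗ ψ ∘ₗ (LinearMap.id - X.op 1)
  have hf : ∀ u, f u = Y.op 1 (ψ (X.op 1 u)) + (ψ (u - X.op 1 u) - Y.op 1 (ψ (u - X.op 1 u))) :=
    fun u => rfl
  have rel' : ∀ u ∈ S X, SQ.Rel φ u (f u) := by
    intro u hu
    rw [hf]
    have h1 := ce _ _ (rel _ (eS hX.1 u hu))
    have hm : u - X.op 1 u ∈ S X := Submodule.sub_mem _ hu (eS hX.1 u hu)
    have h2 := (rel _ hm).sub (ce _ _ (rel _ hm))
    have h3 := h1.add h2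
    have e : X.op 1 (X.op 1 u) + (u - X.op 1 u - X.op 1 (u - X.op 1 u)) = u := by
      simp only [map_sub, hX.ee]; abel
    rw [e] at h3
    exact h3
  refine ⟨f, ⟨?_, ?_⟩, rel'⟩
  · rw [Fin.forall_fin_two]
    refine ⟨fun u => ?_, fun u => ?_⟩
    · have e2 : ∀ x, X.op 1 (X.op 0 x) = X.op 0 x - X.op 0 (X.op 1 x) :=
          fun x => eq_sub_of_add_eq' (hX.Te x)
      simp only [hf, hY.Te', e2, map_add, map_sub, p1]
      abel
    · simp only [hf, hX.ee, hY.ee, map_add, map_sub]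
      abel
  · rw [Fin.forall_fin_two]
    refine ⟨fun u hu => ?_, fun u hu => ?_⟩
    · exact (rel' u (hX.K0 u (hX.IK hu))).mem (BI hY) (hφ.2 2) hu
    · exact (rel' u (hX.K0 u hu)).mem (BK hY) (hφ.2 3) hu

end G1

theorem finL_good1 : FinL (Good1 (k := k) : Ob.{v} k 2 2 → Prop) := by
  have f1 : FinL (fun X : Ob.{v} k 2 2 => ∃ i : Bool, TopP i X) :=
    ⟨Bool, inferInstance, fun i X => TopP i X, fun X h => h, fun i X Y h h' => h.linked h'⟩
  have f2 : FinL (Good1' (k := k) : Ob.{v} k 2 2 → Prop) := by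
    refine FinL.stage2 Good1' G1.F Good2 G1.goodF
      (fun X Y hX hY f φ => ∀ u ∈ G1.S X, SQ.Rel (S := G1.S X) (B := G1.B X) (S' := G1.S Y) (B' := G1.B Y) φ u (f u)) ?_ ?_ finL_good2
    · intro X Y hX hY f g φ ψ h1 h2 h3
      exact SQ.nil h1 h2 h3
    · intro X Y hX hY φ h
      exact G1.lift X Y hX hY φ h
  refine (f1.or f2).mono fun X h => ?_
  by_cases h3 : ∃ u, X.op 0 (X.op 0 (X.op 0 u)) ≠ 0
  · left
    obtain ⟨u, hu⟩ := h3
    by_cases h0 : X.op 0 (X.op 0 (X.op 0 (X.op 1 u))) = 0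
    · refine ⟨false, h, u - X.op 1 u, ?_, by simp [sg, h.ee]⟩
      simpa [h0] using hu
    · exact ⟨true, h, X.op 1 u, h0, by simp [sg, h.ee]⟩
  · right
    push Not at h3
    exact ⟨h, h3⟩

end SN

namespace SN
universe v
variable {k : Type} [Field k]

/-- the initial category -/
structure Good0 (X : Ob.{v} k 1 1) : Prop where
  T5 : X.op 0 ^ 5 = 0
  U : ∀ u ∈ X.sub 0, X.op 0 u ∈ X.sub 0
  nt : ∃ u : X.V, u ≠ 0

namespace G0

/-- elements of the subspace of given height in the big space -/
def Hi (X : Ob.{v} k 1 1) (i : ℕ) : Submodule k X.V := X.sub 0 ⊓ LinearMap.range (X.op 0 ^ i)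
/-- elements of the subspace of given height in the small space -/
def Lo (X : Ob.{v} k 1 1) (i : ℕ) : Submodule k X.V := (X.sub 0).map (X.op 0 ^ i)

variable {X Y : Ob.{v} k 1 1}

theorem powU (h : Good0 X) (i : ℕ) : ∀ u ∈ X.sub 0, (X.op 0 ^ i) u ∈ X.sub 0 := by
  induction i with
  | zero => intro u hu; exact hu
  | succ i ih => intro u hu; rw [pow_succ_apply]; exact h.U _ (ih u hu)

theorem Lo_le_Hi (h : Good0 X) (i : ℕ) : Lo X i ≤ Hi X i := by
  rintro _ ⟨u, hu, rfl⟩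
  exact ⟨powU h i u hu, u, rfl⟩

theorem Hi_succ (i : ℕ) : Hi X (i + 1) ≤ Hi X i := by
  rintro u ⟨hu, y, rfl⟩
  refine ⟨hu, X.op 0 y, ?_⟩
  rw [pow_comm_apply, pow_succ_apply]

theorem Lo_succ (h : Good0 X) (i : ℕ) : Lo X (i + 1) ≤ Lo X i := by
  rintro _ ⟨u, hu, rfl⟩
  exact ⟨X.op 0 u, h.U u hu, by rw [pow_comm_apply, pow_succ_apply]⟩

theorem T_Hi (h : Good0 X) (i : ℕ) (u : X.V) (hu : u ∈ Hi X i) : X.op 0 u ∈ Hi X (i + 1) := by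
  obtain ⟨hu, y, rfl⟩ := hu
  exact ⟨h.U _ hu, y, by rw [pow_succ_apply]⟩

theorem T_Lo (i : ℕ) (u : X.V) (hu : u ∈ Lo X i) : X.op 0 u ∈ Lo X (i + 1) := by
  obtain ⟨y, hy, rfl⟩ := hu
  exact ⟨y, hy, by rw [pow_succ_apply]⟩

theorem Hi_zero : Hi X 0 = X.sub 0 := by
  unfold Hi; rw [pow_zero]; exact inf_eq_left.2 fun u _ => ⟨u, rfl⟩

theorem Lo_zero : Lo X 0 = X.sub 0 := by
  unfold Lo; rw [pow_zero]; exact Submodule.map_id _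

theorem pow_big (h : Good0 X) {i : ℕ} (hi : 5 ≤ i) : X.op 0 ^ i = 0 := by
  obtain ⟨j, rfl⟩ := Nat.exists_eq_add_of_le hi
  rw [pow_add, h.T5, zero_mul]

theorem Hi_big (h : Good0 X) {i : ℕ} (hi : 5 ≤ i) : Hi X i = ⊥ := by
  rw [eq_bot_iff]
  rintro u ⟨-, y, rfl⟩
  rw [pow_big h hi]; simp

theorem isHom_iff {f : X.V →ₗ[k] Y.V} (h1 : ∀ u, f (X.op 0 u) = Y.op 0 (f u))
    (h2 : ∀ u ∈ X.sub 0, f u ∈ Y.sub 0) : IsHom X Y f := by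
  refine ⟨fun i => ?_, fun i => ?_⟩
  · obtain rfl : i = 0 := Subsingleton.elim _ _; exact h1
  · obtain rfl : i = 0 := Subsingleton.elim _ _; exact h2

/-- only one quotient matters -/
def OneP (i : ℕ) (X : Ob.{v} k 1 1) : Prop :=
  Good0 X ∧ Hi X i ≤ Lo X i ∧ Hi X (i + 2) ≤ Lo X (i + 2) ∧ ∃ x ∈ Hi X (i + 1), x ∉ Lo X (i + 1)

theorem OneP.linked {j : ℕ} (HX : OneP j X) (HY : OneP j Y) : Linked X Y := by
  have key : ∀ X Y : Ob.{v} k 1 1, OneP j X → OneP j Y → ∀ (l : X.V →ₗ[k] k) (y : Y.V),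
      (∀ u ∈ Lo X (j + 1), l u = 0) → y ∈ Hi Y (j + 1) →
      ∃ f, IsHom X Y f ∧ ∀ u ∈ Hi X (j + 1), f u ∈ Hi Y (j + 1) ∧ f u - l u • y ∈ Lo Y (j + 1) := by
    rintro X Y ⟨hX, a1, a2, -⟩ ⟨hY, b1, b2, -⟩ l y hl hy
    let R0 : Submodule k (X.V × Y.V) :=
      (Hi X (j + 1)).prod (Hi Y (j + 1)) ⊓
        (Lo Y (j + 1)).comap (LinearMap.snd k X.V Y.V - (l ∘ₗ LinearMap.fst k X.V Y.V).smulRight y)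
    have mR0 : ∀ u u', (u, u') ∈ R0 ↔ (u ∈ Hi X (j + 1) ∧ u' ∈ Hi Y (j + 1)) ∧
        u' - l u • y ∈ Lo Y (j + 1) := fun u u' => Iff.rfl
    let R : ℕ → Submodule k (X.V × Y.V) := fun i => if i = j + 1 then R0 else (Hi X i).prod (Lo Y i)
    have m1 : ∀ u u', (u, u') ∈ R (j + 1) ↔ (u ∈ Hi X (j + 1) ∧ u' ∈ Hi Y (j + 1)) ∧
        u' - l u • y ∈ Lo Y (j + 1) := fun u u' => by
      have : R (j + 1) = R0 := if_pos rfl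
      rw [this]; exact mR0 u u'
    have m2 : ∀ i, i ≠ j + 1 → ∀ u u', (u, u') ∈ R i ↔ u ∈ Hi X i ∧ u' ∈ Lo Y i := fun i hi u u' => by
      have : R i = (Hi X i).prod (Lo Y i) := if_neg hi
      rw [this]; exact Iff.rfl
    obtain ⟨g, g1, g2, g3⟩ := lift1 (X.op 0) (Y.op 0) (X.sub 0) (Y.sub 0) ⟨5, hX.T5⟩ hX.U hY.U R
      (by
        intro i u hu hu'
        by_cases hi : i = j + 1
        · subst hi
          refine ⟨l u • y, Submodule.smul_mem _ _ hy.1, Submodule.smul_mem _ _ hy.2, ?_⟩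
          rw [m1]
          exact ⟨⟨⟨hu, hu'⟩, Submodule.smul_mem _ _ hy⟩, by simp⟩
        · exact ⟨0, Submodule.zero_mem _, Submodule.zero_mem _, (m2 i hi _ _).2
            ⟨⟨hu, hu'⟩, Submodule.zero_mem _⟩⟩)
      (by
        intro i u' h
        by_cases hi : i = j + 1
        · subst hi
          have := ((m1 _ _).1 h).2
          rw [map_zero, zero_smul, sub_zero] at this
          exact this
        · exact ((m2 i hi _ _).1 h).2)
      (by
        intro i u hu u' hu'
        have h1 : (X.op 0 ^ i) u ∈ Lo X i := ⟨u, hu, rfl⟩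
        have h2 : (Y.op 0 ^ i) u' ∈ Lo Y i := ⟨u', hu', rfl⟩
        by_cases hi : i = j + 1
        · subst hi
          rw [m1, hl _ h1]
          exact ⟨⟨Lo_le_Hi hX _ h1, Lo_le_Hi hY _ h2⟩, by simpa using h2⟩
        · exact (m2 i hi _ _).2 ⟨Lo_le_Hi hX _ h1, h2⟩)
      (by
        intro i u u' h
        by_cases hi : i = j + 1
        · subst hi
          rw [m1] at h
          rw [m2 _ (by omega)]
          exact ⟨T_Hi hX _ _ h.1.1, b2 (T_Hi hY _ _ h.1.2)⟩
        · rw [m2 i hi] at h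
          by_cases hi' : i = j
          · subst hi'
            have h1 := T_Lo _ _ (a1 h.1)
            have h2 := T_Lo _ _ h.2
            rw [m1, hl _ h1]
            exact ⟨⟨Lo_le_Hi hX _ h1, Lo_le_Hi hY _ h2⟩, by simpa using h2⟩
          · rw [m2 _ (by omega)]
            exact ⟨T_Hi hX _ _ h.1, T_Lo _ _ h.2⟩)
      (by
        intro i u u' h
        by_cases hi : i = j + 1
        · subst hi
          rw [m2 _ (by omega)] at h
          have h1 := Lo_succ hX _ (a2 h.1)
          have h2 := Lo_succ hY _ h.2
          rw [m1, hl _ h1]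
          exact ⟨⟨Lo_le_Hi hX _ h1, Lo_le_Hi hY _ h2⟩, by simpa using h2⟩
        · rw [m2 i hi]
          by_cases hi' : i = j
          · subst hi'
            rw [m1] at h
            exact ⟨Hi_succ _ h.1.1, b1 (Hi_succ _ h.1.2)⟩
          · rw [m2 _ (by omega)] at h
            exact ⟨Hi_succ _ h.1, Lo_succ hY _ h.2⟩)
    refine ⟨g, isHom_iff g1 g2, fun u hu => ?_⟩
    have := (m1 _ _).1 (g3 (j + 1) u hu.1 hu.2)
    exact ⟨this.1.2, this.2⟩
  have dual : ∀ X : Ob.{v} k 1 1, OneP j X → ∃ (x : X.V) (l : X.V →ₗ[k] k), x ∈ Hi X (j + 1) ∧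
      l x = 1 ∧ ∀ u ∈ Lo X (j + 1), l u = 0 := by
    rintro X ⟨h, -, -, x, hx, hx'⟩
    obtain ⟨l, l1, l2⟩ := Submodule.exists_le_ker_of_notMem hx'
    refine ⟨x, (l x)⁻¹ • l, hx, by simp [l1], fun u hu => ?_⟩
    have : l u = 0 := l2 hu
    simp [this]
  obtain ⟨x, l, x1, l1, l2⟩ := dual X HX
  obtain ⟨y, m, y1, m1, m2⟩ := dual Y HY
  obtain ⟨f, f1, f2⟩ := key X Y HX HY l y l2 y1
  obtain ⟨g, g1, g2⟩ := key Y X HY HX m x m2 x1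
  refine ⟨f, g, f1, g1, ?_⟩
  rintro ⟨n, hn⟩
  have : ∀ n, ((g ∘ₗ f : Module.End k X.V) ^ n) x ∈ Hi X (j + 1) ∧
      l (((g ∘ₗ f : Module.End k X.V) ^ n) x) = 1 := by
    intro n; induction n with
    | zero => exact ⟨x1, l1⟩
    | succ n ih =>
      rw [pow_succ_apply]
      obtain ⟨ih1, ih2⟩ := ih
      generalize ((g ∘ₗ f : Module.End k X.V) ^ n) x = z at *
      obtain ⟨p1, p2⟩ := f2 z ih1
      obtain ⟨q1, q2⟩ := g2 _ p1
      refine ⟨q1, ?_⟩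
      have e1 := m2 _ p2
      have e2 := l2 _ q2
      simp only [map_sub, map_smul, m1, l1, smul_eq_mul, mul_one, ih2] at e1 e2
      rw [LinearMap.comp_apply, sub_eq_zero.1 e2, sub_eq_zero.1 e1]
  have h1 := (this n).2
  rw [hn] at h1
  simp at h1

/-- free types -/
def FreeP (n : ℕ) (b : Bool) (X : Ob.{v} k 1 1) : Prop :=
  Good0 X ∧ (b = false → X.sub 0 = ⊥) ∧ ∃ x, (b = true → x ∈ X.sub 0) ∧ (X.op 0 ^ (n + 1)) x = 0 ∧
    (X.op 0 ^ n) x ∉ LinearMap.range (X.op 0 ^ (n + 1))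

theorem FreeP.linked {n : ℕ} {b : Bool} (HX : FreeP n b X) (HY : FreeP n b Y) : Linked X Y := by
  have key : ∀ X Y : Ob.{v} k 1 1, Good0 Y → (b = false → X.sub 0 = ⊥) → ∀ (l : X.V →ₗ[k] k) (x : X.V) (y : Y.V),
      (b = true → y ∈ Y.sub 0) → (X.op 0 ^ (n + 1)) x = 0 → (Y.op 0 ^ (n + 1)) y = 0 →
      l ((X.op 0 ^ n) x) = 1 → (∀ u, l ((X.op 0 ^ (n + 1)) u) = 0) →
      ∃ f, IsHom X Y f ∧ f ((X.op 0 ^ n) x) = (Y.op 0 ^ n) y := by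
    intro X Y hY hb l x y hy x1 y1 l1 l2
    refine ⟨frob l (X.op 0) (Y.op 0) (n + 1) y, isHom_iff (frob_comm _ _ _ _ _ l2 y1) ?_, ?_⟩
    · intro u hu
      cases b
      · rw [hb rfl] at hu
        rw [(Submodule.mem_bot k).1 hu, map_zero]; exact Submodule.zero_mem _
      · rw [frob_apply]
        exact Submodule.sum_mem _ fun a _ => Submodule.smul_mem _ _ (powU hY a _ (hy rfl))
    · rw [frob_apply, Finset.sum_eq_single n]
      · simp [l1]
      · intro a ha han
        have ha' := Finset.mem_range.1 ha
        rw [← pow_add_apply, show n + 1 - 1 - a + n = (n - 1 - a) + (n + 1) by omega, pow_add_apply, x1]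
        simp
      · intro h; exact absurd (Finset.self_mem_range_succ n) h
  have dual : ∀ X : Ob.{v} k 1 1, ∀ x, (X.op 0 ^ n) x ∉ LinearMap.range (X.op 0 ^ (n + 1)) →
      ∃ l : X.V →ₗ[k] k, l ((X.op 0 ^ n) x) = 1 ∧ ∀ u, l ((X.op 0 ^ (n + 1)) u) = 0 := by
    intro X x hx
    obtain ⟨l, l1, l2⟩ := Submodule.exists_le_ker_of_notMem hx
    refine ⟨(l ((X.op 0 ^ n) x))⁻¹ • l, by simp [l1], fun u => ?_⟩
    have : l ((X.op 0 ^ (n + 1)) u) = 0 := l2 ⟨u, rfl⟩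
    simp [this]
  obtain ⟨a1, a2, x, a3, a4, a5⟩ := HX
  obtain ⟨b1, b2, y, b3, b4, b5⟩ := HY
  obtain ⟨l, l1, l2⟩ := dual X x a5
  obtain ⟨m, m1, m2⟩ := dual Y y b5
  obtain ⟨f, f1, f2⟩ := key X Y b1 a2 l x y b3 a4 b4 l1 l2
  obtain ⟨g, g1, g2⟩ := key Y X a1 b2 m y x a3 b4 a4 m1 m2
  refine ⟨f, g, f1, g1, not_nil_of_fix _ ((X.op 0 ^ n) x) ?_ ?_⟩
  · intro h; rw [h, map_zero] at l1; exact zero_ne_one l1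
  · rw [LinearMap.comp_apply, f2, g2]

theorem exists_free (h : Good0 X) (W : Submodule k X.V) (hW : ∀ u ∈ W, X.op 0 u ∈ W)
    (hW' : ∀ i, ∀ u ∈ W, u ∈ LinearMap.range (X.op 0 ^ i) → u ∈ W.map (X.op 0 ^ i))
    (hne : ∃ u ∈ W, u ≠ 0) : ∃ n < 5, ∃ x ∈ W, (X.op 0 ^ (n + 1)) x = 0 ∧
      (X.op 0 ^ n) x ∉ LinearMap.range (X.op 0 ^ (n + 1)) := by
  classical
  obtain ⟨u, hu, hu0⟩ := hne
  let P : ℕ → Prop := fun m => ∃ s ∈ W, s ≠ 0 ∧ X.op 0 s = 0 ∧ s ∈ LinearMap.range (X.op 0 ^ m)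
  have hP0 : P 0 := by
    have hex : ∃ n, (X.op 0 ^ n) u = 0 := ⟨5, by rw [h.T5]; rfl⟩
    have hs := Nat.find_spec hex
    have hmin := fun m => Nat.find_min (H := hex) (m := m)
    rcases hf : Nat.find hex with _ | m
    · rw [hf] at hs; exact absurd hs hu0
    · rw [hf] at hs
      refine ⟨(X.op 0 ^ m) u, ?_, hmin m (by omega), by rw [← pow_succ_apply]; exact hs, ⟨_, rfl⟩⟩
      clear * - hu hW
      induction m with
      | zero => exact hu
      | succ m ih => rw [pow_succ_apply]; exact hW _ ih
  have hP5 : ∀ m, P m → m < 5 := by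
    rintro m ⟨s, -, h0, -, y, rfl⟩
    by_contra hm
    apply h0; rw [pow_big h (by omega)]; rfl
  have hm := Nat.findGreatest_spec (P := P) (m := 0) (n := 5) (by omega) hP0
  set m := Nat.findGreatest P 5 with hmdef
  obtain ⟨s, s1, s2, s3, s4⟩ := hm
  obtain ⟨x, hx, rfl⟩ := hW' _ s s1 s4
  refine ⟨m, hP5 m ⟨_, s1, s2, s3, s4⟩, x, hx, by rw [pow_succ_apply]; exact s3, fun hr => ?_⟩
  have hlt : P (m + 1) := ⟨_, s1, s2, s3, hr⟩
  have h1 := Nat.le_findGreatest (P := P) (n := 5) (m := m + 1) (by have := hP5 _ hlt; omega) hlt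
  omega

theorem exists_FreeP (h : Good0 X) (hW : ∀ i, Hi X i ≤ Lo X i) : ∃ n : Fin 5, ∃ b, FreeP n b X := by
  by_cases hU : ∃ u ∈ X.sub 0, u ≠ 0
  · obtain ⟨n, hn, x, hx, h1, h2⟩ := exists_free h (X.sub 0) h.U (fun i u hu hu' => hW i ⟨hu, hu'⟩) hU
    exact ⟨⟨n, hn⟩, true, h, by simp, x, fun _ => hx, h1, h2⟩
  · push Not at hU
    obtain ⟨n, hn, x, hx, h1, h2⟩ := exists_free h ⊤ (fun _ _ => trivial)
      (fun i u _ hu => by rw [Submodule.map_top]; exact hu) (by simpa using h.nt)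
    exact ⟨⟨n, hn⟩, false, h, fun _ => by rw [eq_bot_iff]; exact hU, x, by simp, h1, h2⟩

end G0
end SN

namespace SN
universe v
variable {k : Type} [Field k]

theorem ext_rel {V V' : Type v} [AddCommGroup V] [Module k V] [AddCommGroup V'] [Module k V']
    (H D : Submodule k V) (hD : D ≤ H) (Q : Submodule k (V × V')) (hQ : ∀ u ∈ H, ∃ u', (u, u') ∈ Q) :
    ∃ G ≤ Q, (∀ u ∈ H, ∃ d ∈ D, ∃ c', (u - d, c') ∈ G) ∧
      ∀ c c', (c, c') ∈ G → c ∈ D → c = 0 ∧ c' = 0 := by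
  obtain ⟨C, hC⟩ := Submodule.exists_isCompl D
  -- work with `C ⊓ H`
  let p : ↥(Q ⊓ (C ⊓ H).comap (LinearMap.fst k V V')) →ₗ[k] ↥(C ⊓ H) :=
    (LinearMap.fst k V V').restrict (fun x hx => hx.2)
  have hp : Function.Surjective p := by
    rintro ⟨c, hc⟩
    obtain ⟨u', hu'⟩ := hQ c hc.2
    exact ⟨⟨(c, u'), hu', hc⟩, rfl⟩
  obtain ⟨s, hs⟩ := p.exists_rightInverse_of_surjective (LinearMap.range_eq_top.2 hp)
  have hs' : ∀ c : ↥(C ⊓ H), ((s c : V × V')).1 = c := fun c =>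
    congrArg Subtype.val (LinearMap.congr_fun hs c)
  refine ⟨LinearMap.range ((Submodule.subtype _) ∘ₗ s), ?_, ?_, ?_⟩
  · rintro _ ⟨c, rfl⟩; exact (s c).2.1
  · intro u hu
    obtain ⟨d, hd, c, hc, rfl⟩ := Submodule.mem_sup.1 (hC.sup_eq_top ▸ Submodule.mem_top : u ∈ D ⊔ C)
    have hcH : c ∈ H := by
      have := H.sub_mem hu (hD hd); simpa using this
    refine ⟨d, hd, (s ⟨c, hc, hcH⟩ : V × V').2, ⟨c, hc, hcH⟩, ?_⟩
    refine Prod.ext ?_ rfl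
    rw [add_sub_cancel_left]; exact hs' _
  · rintro c c' ⟨⟨a, ha, ha'⟩, h⟩ hc
    have h1 : a = c := (hs' ⟨a, ha, ha'⟩).symm.trans (congrArg Prod.fst h)
    subst h1
    have h0 : a = 0 := Submodule.disjoint_def.1 hC.disjoint a hc ha
    subst h0
    refine ⟨rfl, ?_⟩
    have h2 : (⟨0, ha, ha'⟩ : ↥(C ⊓ H)) = 0 := rfl
    rw [h2, map_zero] at h
    exact (congrArg Prod.snd h).symm

/-- the conditions for the first functor -/
structure Good0' (X : Ob.{v} k 1 1) : Prop extends Good0 X where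
  ne : (∃ u ∈ G0.Hi X 2, u ∉ G0.Lo X 2) ∨ ∃ u ∈ G0.Hi X 3, u ∉ G0.Lo X 3

namespace G0
variable (X : Ob.{v} k 1 1)

/-- numerator -/
def S : Submodule k (X.V × X.V) := (Hi X 2).prod (Hi X 3)
/-- denominator -/
def B : Submodule k (X.V × X.V) := (Lo X 2).prod (Lo X 3)
/-- the graded operator -/
def tt : X.V × X.V →ₗ[k] X.V × X.V := (LinearMap.snd k X.V X.V).prod (X.op 0 ∘ₗ LinearMap.fst k X.V X.V)
/-- the grading -/
def ed : X.V × X.V →ₗ[k] X.V × X.V := (LinearMap.fst k X.V X.V).prod 0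
/-- the smaller flag member -/
def I : Submodule k (X.V × X.V) := ((Hi X 1).map (X.op 0)).prod (Hi X 4 ⊔ Lo X 3)
/-- the larger flag member -/
def K : Submodule k (X.V × X.V) := (Lo X 1).prod ((Lo X 4).comap (X.op 0))

variable {X}

@[simp] theorem tt_apply (a b : X.V) : tt X (a, b) = (b, X.op 0 a) := rfl
@[simp] theorem ed_apply (a b : X.V) : ed X (a, b) = (a, 0) := rfl

theorem ttS (h : Good0 X) (u) (hu : u ∈ S X) : tt X u ∈ S X :=
  ⟨Hi_succ _ hu.2, T_Hi h _ _ hu.1⟩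

theorem ttB (h : Good0 X) (u) (hu : u ∈ B X) : tt X u ∈ B X :=
  ⟨Lo_succ h _ hu.2, T_Lo _ _ hu.1⟩

theorem edS (u) (hu : u ∈ S X) : ed X u ∈ S X := ⟨hu.1, Submodule.zero_mem _⟩
theorem edB (u) (hu : u ∈ B X) : ed X u ∈ B X := ⟨hu.1, Submodule.zero_mem _⟩

theorem BI (h : Good0 X) (u) (_ : u ∈ S X) (hu : u ∈ B X) : u ∈ I X := by
  refine ⟨?_, Submodule.mem_sup_right hu.2⟩
  obtain ⟨y, hy, e⟩ := hu.1
  exact ⟨X.op 0 y, Lo_le_Hi h _ ⟨y, hy, by rw [pow_one]⟩, e⟩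

theorem IK (h : Good0 X) : I X ≤ K X := by
  rintro ⟨a, b⟩ ⟨ha, hb⟩
  refine ⟨?_, ?_⟩
  · obtain ⟨y, hy, e⟩ := ha
    exact ⟨y, hy.1, by rw [pow_one]; exact e⟩
  · obtain ⟨c, hc, d, hd, e⟩ := Submodule.mem_sup.1 hb
    have e' : c + d = b := e
    show X.op 0 b ∈ Lo X 4
    have h5 : X.op 0 c ∈ Hi X 5 := T_Hi h _ _ hc
    rw [Hi_big h le_rfl] at h5
    rw [← e', map_add, (Submodule.mem_bot k).1 h5, zero_add]
    exact T_Lo _ _ hd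

/-- the first functor -/
def F (X : Ob.{v} k 1 1) (h : Good0' X) : Ob.{v} k 2 2 where
  V := SQ (S X) (B X)
  op := ![SQ.map _ _ _ _ (tt X) (ttS h.1) (fun u _ => ttB h.1 u),
    SQ.map _ _ _ _ (ed X) edS (fun u _ => edB u)]
  sub := ![SQ.sub _ _ (I X), SQ.sub _ _ (K X)]

theorem goodF (X : Ob.{v} k 1 1) (h : Good0' X) : Good1 (F X h) where
  T4 q := by
    obtain ⟨⟨a, b⟩, hu, rfl⟩ := SQ.surj q
    refine (SQ.mk_eq_zero (S := S X) (B := B X) _).2 ?_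
    have h2 : X.op 0 (X.op 0 b) ∈ Hi X 5 := T_Hi h.1 _ _ (T_Hi h.1 _ _ hu.2)
    rw [Hi_big h.1 le_rfl] at h2
    exact ⟨⟨a, hu.1.1, rfl⟩, show X.op 0 (X.op 0 b) ∈ Lo X 3 by
      rw [(Submodule.mem_bot k).1 h2]; exact Submodule.zero_mem _⟩
  ee q := by
    obtain ⟨⟨a, b⟩, hu, rfl⟩ := SQ.surj q
    rfl
  Te q := by
    obtain ⟨⟨a, b⟩, hu, rfl⟩ := SQ.surj q
    have h1 : (a, (0 : X.V)) ∈ S X := ⟨hu.1, Submodule.zero_mem _⟩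
    refine (SQ.mk_eq (S := S X) (B := B X) (u := tt X (ed X (a, b)) + ed X (tt X (a, b)))
      (v := tt X (a, b)) (Submodule.add_mem _ (ttS h.1 _ (edS _ hu)) (edS _ (ttS h.1 _ hu))) _).2 ?_
    simp
  st i q hq := by
    obtain ⟨u, hu, rfl⟩ := SQ.surj q
    have key : ∀ A : Submodule k (X.V × X.V), (∀ u ∈ A, ed X u ∈ A) →
        (SQ.mk (S X) (B X) u hu ∈ SQ.sub _ _ A) →
        SQ.mk (S X) (B X) (ed X u) (edS _ hu) ∈ SQ.sub _ _ A := by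
      intro A hA h'
      rw [SQ.mk_mem_sub'] at *
      obtain ⟨v, h1, h2, h3⟩ := h'
      exact ⟨_, hA v h1, edS v h2, by rw [← map_sub]; exact edB _ h3⟩
    revert i
    rw [Fin.forall_fin_two]
    exact ⟨key _ fun u hu => ⟨hu.1, Submodule.zero_mem _⟩,
      key _ fun u hu => ⟨hu.1, Submodule.zero_mem _⟩⟩
  I0 q := by
    obtain ⟨⟨a, b⟩, hu, rfl⟩ := SQ.surj q
    refine (SQ.mk_mem_sub' (S := S X) (B := B X) (ttS h.1 _ (ttS h.1 _ hu))).2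
      ⟨_, ?_, ttS h.1 _ (ttS h.1 _ hu), by simp⟩
    exact ⟨⟨a, Hi_succ _ hu.1, rfl⟩, Submodule.mem_sup_left (T_Hi h.1 _ _ hu.2)⟩
  IK q hq := by
    obtain ⟨u, hu, rfl⟩ := SQ.surj q
    have := (SQ.mk_mem_sub (BI h.1) hu).1 hq
    exact (SQ.mk_mem_sub' (S := S X) (B := B X) hu).2 ⟨u, IK h.1 this, hu, by simp⟩
  K0 q hq := by
    obtain ⟨u, hu, rfl⟩ := SQ.surj q
    have := (SQ.mk_mem_sub (fun u h1 h2 => IK h.1 (BI h.1 u h1 h2)) hu).1 hq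
    obtain ⟨a, b⟩ := u
    refine (SQ.mk_eq_zero (S := S X) (B := B X) _).2 ?_
    exact ⟨T_Lo _ _ this.1, Lo_succ h.1 _ this.2⟩
  nt := by
    rcases h.ne with ⟨u, hu, hu'⟩ | ⟨u, hu, hu'⟩
    · refine ⟨SQ.mk (S X) (B X) (u, 0) ⟨hu, Submodule.zero_mem _⟩, fun h0 => ?_⟩
      exact hu' ((SQ.mk_eq_zero _).1 h0).1
    · refine ⟨SQ.mk (S X) (B X) (0, u) ⟨Submodule.zero_mem _, hu⟩, fun h0 => ?_⟩
      exact hu' ((SQ.mk_eq_zero _).1 h0).2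

theorem lift (X Y : Ob.{v} k 1 1) (hX : Good0' X) (hY : Good0' Y)
    (φ : SQ (S X) (B X) →ₗ[k] SQ (S Y) (B Y)) (hφ : IsHom (F X hX) (F Y hY) φ) :
    ∃ f, IsHom X Y f ∧ ∀ u ∈ S X, SQ.Rel φ u ((f.prodMap f) u) := by
  have gX := hX.1
  have gY := hY.1
  have cT : ∀ u u', SQ.Rel φ u u' → SQ.Rel φ (tt X u) (tt Y u') := fun u u' r =>
    r.apply (hS := ttS gX) (hB := fun u _ => ttB gX u) (hS' := ttS gY)
      (hB' := fun u _ => ttB gY u) (hφ.1 0)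
  have ce : ∀ u u', SQ.Rel φ u u' → SQ.Rel φ (ed X u) (ed Y u') := fun u u' r =>
    r.apply (hS := edS) (hB := fun u _ => edB u) (hS' := edS)
      (hB' := fun u _ => edB u) (hφ.1 1)
  have p2 : ∀ {a b a' b'}, SQ.Rel φ (a, b) (a', b') → SQ.Rel φ (a, 0) (a', 0) := fun h => ce _ _ h
  have p3 : ∀ {a b a' b'}, SQ.Rel φ (a, b) (a', b') → SQ.Rel φ (0, b) (0, b') := by
    intro a b a' b' h
    have := h.sub (ce _ _ h)
    simpa using this
  let r2 : Submodule k (X.V × Y.V) :=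
    { carrier := {p | SQ.Rel φ (p.1, 0) (p.2, 0)}
      zero_mem' := SQ.Rel.zero
      add_mem' := fun {p q} h h' => by have := h.add h'; simpa using this
      smul_mem' := fun c p h => by have := h.smul c; simpa using this }
  let r3 : Submodule k (X.V × Y.V) :=
    { carrier := {p | SQ.Rel φ (0, p.1) (0, p.2)}
      zero_mem' := SQ.Rel.zero
      add_mem' := fun {p q} h h' => by have := h.add h'; simpa using this
      smul_mem' := fun c p h => by have := h.smul c; simpa using this }
  have h2 : ∀ {u u'}, (u, u') ∈ r2 → u ∈ Hi X 2 ∧ u' ∈ Hi Y 2 := fun ⟨h, h', _⟩ => ⟨h.1, h'.1⟩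
  have h3 : ∀ {u u'}, (u, u') ∈ r3 → u ∈ Hi X 3 ∧ u' ∈ Hi Y 3 := fun ⟨h, h', _⟩ => ⟨h.2, h'.2⟩
  have tot2 : ∀ u ∈ Hi X 2, ∃ u', (u, u') ∈ r2 := by
    intro u hu
    obtain ⟨⟨a, b⟩, h⟩ := SQ.Rel.exists φ (u := (u, 0)) ⟨hu, Submodule.zero_mem _⟩
    exact ⟨a, p2 h⟩
  have tot3 : ∀ u ∈ Hi X 3, ∃ u', (u, u') ∈ r3 := by
    intro u hu
    obtain ⟨⟨a, b⟩, h⟩ := SQ.Rel.exists φ (u := (0, u)) ⟨Submodule.zero_mem _, hu⟩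
    exact ⟨b, p3 h⟩
  have zer2 : ∀ u', (0, u') ∈ r2 → u' ∈ Lo Y 2 := fun u' h =>
    (SQ.Rel.zer (B := B X) (B' := B Y) (φ := φ) (u := (0, 0)) (Submodule.zero_mem _) h).1
  have zer3 : ∀ u', (0, u') ∈ r3 → u' ∈ Lo Y 3 := fun u' h =>
    (SQ.Rel.zer (B := B X) (B' := B Y) (φ := φ) (u := (0, 0)) (Submodule.zero_mem _) h).2
  have lo2 : ∀ u ∈ Lo X 2, ∀ u' ∈ Lo Y 2, (u, u') ∈ r2 := fun u hu u' hu' =>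
    SQ.Rel.ofB ⟨Lo_le_Hi gX _ hu, Submodule.zero_mem _⟩ ⟨Lo_le_Hi gY _ hu', Submodule.zero_mem _⟩
      ⟨hu, Submodule.zero_mem _⟩ ⟨hu', Submodule.zero_mem _⟩
  have lo3 : ∀ u ∈ Lo X 3, ∀ u' ∈ Lo Y 3, (u, u') ∈ r3 := fun u hu u' hu' =>
    SQ.Rel.ofB ⟨Submodule.zero_mem _, Lo_le_Hi gX _ hu⟩ ⟨Submodule.zero_mem _, Lo_le_Hi gY _ hu'⟩
      ⟨Submodule.zero_mem _, hu⟩ ⟨Submodule.zero_mem _, hu'⟩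
  have s23 : ∀ {u u'}, (u, u') ∈ r2 → (X.op 0 u, Y.op 0 u') ∈ r3 := fun h => cT _ _ h
  have s32 : ∀ {u u'}, (u, u') ∈ r3 → (u, u') ∈ r2 := by
    intro u u' h
    have := cT _ _ h
    simp only [tt_apply, map_zero] at this
    exact this
  have i1 : ∀ u ∈ Hi X 1, ∃ u' ∈ Hi Y 1, (X.op 0 u, Y.op 0 u') ∈ r2 := by
    intro u hu
    obtain ⟨⟨a, b⟩, ⟨⟨c, hc, e⟩, -⟩, h⟩ := SQ.Rel.exists_mem (hφ.2 0) (u := (X.op 0 u, 0))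
      ⟨T_Hi gX _ _ hu, Submodule.zero_mem _⟩ ⟨⟨u, hu, rfl⟩, Submodule.zero_mem _⟩
    refine ⟨c, hc, ?_⟩
    have e' : Y.op 0 c = a := e
    rw [e']
    exact p2 h
  have i4 : ∀ u ∈ Hi X 4, ∃ u' ∈ Hi Y 4, (u, u') ∈ r3 := by
    intro u hu
    obtain ⟨⟨a, b⟩, ⟨-, hb⟩, h⟩ := SQ.Rel.exists_mem (hφ.2 0) (u := (0, u))
      ⟨Submodule.zero_mem _, Hi_succ _ hu⟩ ⟨Submodule.zero_mem _, Submodule.mem_sup_left hu⟩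
    obtain ⟨c, hc, d, hd, e⟩ := Submodule.mem_sup.1 hb
    have e' : c + d = b := e
    refine ⟨c, hc, ?_⟩
    have h1 : (u, b) ∈ r3 := p3 h
    have h2 := r3.sub_mem h1 (lo3 0 (Submodule.zero_mem _) d hd)
    have e2 : (u, b) - ((0 : X.V), d) = (u, c) := by rw [← e']; simp
    rwa [e2] at h2
  have BK' : ∀ u ∈ S Y, u ∈ B Y → u ∈ K Y := fun u h1 h2 => IK gY (BI gY u h1 h2)
  have k1 : ∀ u u', (u, u') ∈ r2 → u ∈ Lo X 1 → u' ∈ Lo Y 1 := fun u u' h hu =>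
    (SQ.Rel.mem BK' (hφ.2 1) (u := (u, 0)) ⟨hu, Submodule.zero_mem _⟩ h).1
  have k4 : ∀ u u', (u, u') ∈ r3 → X.op 0 u ∈ Lo X 4 → Y.op 0 u' ∈ Lo Y 4 := fun u u' h hu =>
    (SQ.Rel.mem BK' (hφ.2 1) (u := (0, u)) ⟨Submodule.zero_mem _, hu⟩ h).2
  -- the two extra relations
  let TT : X.V × Y.V →ₗ[k] X.V × Y.V := (X.op 0).prodMap (Y.op 0)
  obtain ⟨G1, G1Q, G1t, G1z⟩ := ext_rel (Hi X 1) (Hi X 2 ⊔ Lo X 1)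
    (sup_le (Hi_succ 1) (Lo_le_Hi gX 1)) ((Hi X 1).prod (Hi Y 1) ⊓ r2.comap TT) (by
      intro u hu
      obtain ⟨u', hu', h⟩ := i1 u hu
      exact ⟨u', ⟨hu, hu'⟩, h⟩)
  obtain ⟨G4, G4Q, G4t, G4z⟩ := ext_rel (Hi X 4) ((Hi X 3).map (X.op 0) ⊔ Lo X 4)
    (sup_le (by rintro _ ⟨u, hu, rfl⟩; exact T_Hi gX _ _ hu) (Lo_le_Hi gX 4))
    ((Hi X 4).prod (Hi Y 4) ⊓ r3) (by
      intro u hu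
      obtain ⟨u', hu', h⟩ := i4 u hu
      exact ⟨u', ⟨hu, hu'⟩, h⟩)
  let R1 : Submodule k (X.V × Y.V) := (r2 ⊔ (Lo X 1).prod (Lo Y 1)) ⊔ G1
  let R4 : Submodule k (X.V × Y.V) := (r3.map TT ⊔ (Lo X 4).prod (Lo Y 4)) ⊔ G4
  have R1le : ∀ A : Submodule k (X.V × Y.V), (∀ u u', (u, u') ∈ r2 → (u, u') ∈ A) →
      (∀ u ∈ Lo X 1, ∀ u' ∈ Lo Y 1, (u, u') ∈ A) → (∀ u u', (u, u') ∈ G1 → (u, u') ∈ A) → R1 ≤ A :=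
    fun A a b c => sup_le (sup_le (fun ⟨_, _⟩ h => a _ _ h) (fun ⟨_, _⟩ h => b _ h.1 _ h.2))
      (fun ⟨_, _⟩ h => c _ _ h)
  have R4le : ∀ A : Submodule k (X.V × Y.V), (∀ u u', (u, u') ∈ r3 → (X.op 0 u, Y.op 0 u') ∈ A) →
      (∀ u ∈ Lo X 4, ∀ u' ∈ Lo Y 4, (u, u') ∈ A) → (∀ u u', (u, u') ∈ G4 → (u, u') ∈ A) → R4 ≤ A :=
    fun A a b c => sup_le (sup_le (Submodule.map_le_iff_le_comap.2 fun ⟨_, _⟩ h => a _ _ h)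
      (fun ⟨_, _⟩ h => b _ h.1 _ h.2)) (fun ⟨_, _⟩ h => c _ _ h)
  have r2R1 : r2 ≤ R1 := le_sup_left.trans le_sup_left
  have loR1 : (Lo X 1).prod (Lo Y 1) ≤ R1 := le_sup_right.trans le_sup_left
  have G1R1 : G1 ≤ R1 := le_sup_right
  have r3R4 : ∀ u u', (u, u') ∈ r3 → (X.op 0 u, Y.op 0 u') ∈ R4 := fun u u' h =>
    Submodule.mem_sup_left (Submodule.mem_sup_left ⟨(u, u'), h, rfl⟩)
  have loR4 : (Lo X 4).prod (Lo Y 4) ≤ R4 := le_sup_right.trans le_sup_left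
  have G4R4 : G4 ≤ R4 := le_sup_right
  let R : ℕ → Submodule k (X.V × Y.V) := fun i =>
    match i with
    | 0 => (X.sub 0).prod (Y.sub 0)
    | 1 => R1
    | 2 => r2
    | 3 => r3
    | 4 => R4
    | _ => ⊥
  obtain ⟨g, g1, g2, g3⟩ := lift1 (X.op 0) (Y.op 0) (X.sub 0) (Y.sub 0) ⟨5, gX.T5⟩ gX.U gY.U R
    (by
      have key : ∀ i, (∀ u ∈ Hi X i, ∃ u' ∈ Hi Y i, (u, u') ∈ R i) → ∀ u, u ∈ X.sub 0 →
          u ∈ LinearMap.range (X.op 0 ^ i) →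
          ∃ u', u' ∈ Y.sub 0 ∧ u' ∈ LinearMap.range (Y.op 0 ^ i) ∧ (u, u') ∈ R i := by
        intro i h u hu hu'
        obtain ⟨u', h1, h2⟩ := h u ⟨hu, hu'⟩
        exact ⟨u', h1.1, h1.2, h2⟩
      intro i
      refine key i ?_
      rcases i with _ | _ | _ | _ | _ | i
      · intro u hu
        exact ⟨0, Submodule.zero_mem _, hu.1, Submodule.zero_mem _⟩
      · intro u hu
        obtain ⟨d, hd, c', hc⟩ := G1t u hu
        obtain ⟨a, ha, b, hb, rfl⟩ := Submodule.mem_sup.1 hd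
        obtain ⟨a', ha'⟩ := tot2 a ha
        refine ⟨a' + 0 + c', ?_, ?_⟩
        · rw [add_zero]; exact Submodule.add_mem _ (Hi_succ _ (h2 ha').2) (G1Q hc).1.2
        · have := R1.add_mem (R1.add_mem (r2R1 ha') (loR1 ⟨hb, Submodule.zero_mem _⟩ :
            (b, (0 : Y.V)) ∈ R1)) (G1R1 hc)
          show (_, a' + 0 + c') ∈ R1
          simpa using this
      · intro u hu
        obtain ⟨u', h⟩ := tot2 u hu
        exact ⟨u', (h2 h).2, h⟩
      · intro u hu
        obtain ⟨u', h⟩ := tot3 u hu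
        exact ⟨u', (h3 h).2, h⟩
      · intro u hu
        obtain ⟨d, hd, c', hc⟩ := G4t u hu
        obtain ⟨_, ⟨a, ha, rfl⟩, b, hb, rfl⟩ := Submodule.mem_sup.1 hd
        obtain ⟨a', ha'⟩ := tot3 a ha
        refine ⟨Y.op 0 a' + 0 + c', ?_, ?_⟩
        · rw [add_zero]; exact Submodule.add_mem _ (T_Hi gY _ _ (h3 ha').2) (G4Q hc).1.2
        · have := R4.add_mem (R4.add_mem (r3R4 _ _ ha') (loR4 ⟨hb, Submodule.zero_mem _⟩ :
            (b, (0 : Y.V)) ∈ R4)) (G4R4 hc)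
          show (_, Y.op 0 a' + 0 + c') ∈ R4
          simpa using this
      · intro u hu
        rw [Hi_big gX (by omega)] at hu
        rw [(Submodule.mem_bot k).1 hu]
        exact ⟨0, Submodule.zero_mem _, Submodule.zero_mem _⟩)
    (by
      intro i u' h
      show u' ∈ Lo Y i
      rcases i with _ | _ | _ | _ | _ | i
      · rw [Lo_zero]; exact h.2
      · obtain ⟨_, hy, ⟨c, c'⟩, hc, e⟩ := Submodule.mem_sup.1 h
        obtain ⟨⟨a, a'⟩, ha, ⟨b, b'⟩, hb, rfl⟩ := Submodule.mem_sup.1 hy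
        have e1 : a + b + c = 0 := congrArg Prod.fst e
        have e2 : a' + b' + c' = u' := congrArg Prod.snd e
        obtain ⟨rfl, rfl⟩ := G1z c c' hc (by
          rw [← neg_eq_of_add_eq_zero_right e1]
          exact Submodule.neg_mem _ (Submodule.add_mem_sup (h2 ha).1 hb.1))
        rw [add_zero] at e1 e2
        rw [← e2]
        refine Submodule.add_mem _ (k1 a a' ha ?_) hb.2
        rw [eq_neg_of_add_eq_zero_left e1]; exact Submodule.neg_mem _ hb.1
      · exact zer2 u' h
      · exact zer3 u' h
      · obtain ⟨_, hy, ⟨c, c'⟩, hc, e⟩ := Submodule.mem_sup.1 h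
        obtain ⟨_, ⟨⟨a, a'⟩, ha, rfl⟩, ⟨b, b'⟩, hb, rfl⟩ := Submodule.mem_sup.1 hy
        have e1 : X.op 0 a + b + c = 0 := congrArg Prod.fst e
        have e2 : Y.op 0 a' + b' + c' = u' := congrArg Prod.snd e
        obtain ⟨rfl, rfl⟩ := G4z c c' hc (by
          rw [← neg_eq_of_add_eq_zero_right e1]
          exact Submodule.neg_mem _ (Submodule.add_mem_sup ⟨a, (h3 ha).1, rfl⟩ hb.1))
        rw [add_zero] at e1 e2
        rw [← e2]
        refine Submodule.add_mem _ (k4 a a' ha ?_) hb.2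
        rw [eq_neg_of_add_eq_zero_left e1]; exact Submodule.neg_mem _ hb.1
      · have h' : ((0 : X.V), u') = 0 := h
        have : u' = 0 := congrArg Prod.snd h'
        rw [this]; exact Submodule.zero_mem _)
    (by
      intro i u hu u' hu'
      have e1 : (X.op 0 ^ i) u ∈ Lo X i := ⟨u, hu, rfl⟩
      have e2 : (Y.op 0 ^ i) u' ∈ Lo Y i := ⟨u', hu', rfl⟩
      rcases i with _ | _ | _ | _ | _ | i
      · exact ⟨hu, hu'⟩
      · exact loR1 ⟨e1, e2⟩
      · exact lo2 _ e1 _ e2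
      · exact lo3 _ e1 _ e2
      · exact loR4 ⟨e1, e2⟩
      · rw [pow_big gX (by omega), pow_big gY (by omega)]; exact Submodule.zero_mem _)
    (by
      intro i u u' h
      rcases i with _ | _ | _ | _ | _ | i
      · exact loR1 ⟨⟨u, h.1, rfl⟩, ⟨u', h.2, rfl⟩⟩
      · have := R1le (r2.comap TT) (fun u u' h => s32 (s23 h))
          (fun u hu u' hu' => lo2 _ (T_Lo _ _ hu) _ (T_Lo _ _ hu')) (fun u u' h => (G1Q h).2)
        exact this h
      · exact s23 h
      · exact r3R4 _ _ h
      · have z : ∀ Z : Ob.{v} k 1 1, Good0 Z → ∀ u ∈ Hi Z 4, Z.op 0 u = 0 := by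
          intro Z hZ u hu
          have := T_Hi hZ _ _ hu
          rw [Hi_big hZ (by omega)] at this
          exact (Submodule.mem_bot k).1 this
        have := R4le ((LinearMap.ker TT)) (fun u u' h => by
            have := h3 h
            exact Prod.ext (z X gX _ (T_Hi gX _ _ this.1)) (z Y gY _ (T_Hi gY _ _ this.2)))
          (fun u hu u' hu' => Prod.ext (z X gX _ (Lo_le_Hi gX _ hu)) (z Y gY _ (Lo_le_Hi gY _ hu')))
          (fun u u' h => Prod.ext (z X gX _ (G4Q h).1.1) (z Y gY _ (G4Q h).1.2))
        have h0 : (X.op 0 u, Y.op 0 u') = 0 := this h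
        show (X.op 0 u, Y.op 0 u') ∈ (⊥ : Submodule k _)
        rw [h0]; exact Submodule.zero_mem _
      · have h' : (u, u') = 0 := h
        show (X.op 0 u, Y.op 0 u') ∈ (⊥ : Submodule k _)
        have e1 : u = 0 := congrArg Prod.fst h'
        have e2 : u' = 0 := congrArg Prod.snd h'
        rw [e1, e2, map_zero, map_zero]; exact Submodule.zero_mem _)
    (by
      intro i u u' h
      rcases i with _ | _ | _ | _ | _ | i
      · exact R1le ((X.sub 0).prod (Y.sub 0)) (fun u u' h => ⟨(h2 h).1.1, (h2 h).2.1⟩)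
          (fun u hu u' hu' => ⟨(Lo_le_Hi gX _ hu).1, (Lo_le_Hi gY _ hu').1⟩)
          (fun u u' h => ⟨(G1Q h).1.1.1, (G1Q h).1.2.1⟩) h
      · exact r2R1 h
      · exact s32 h
      · exact R4le r3 (fun u u' h => s23 (s32 h))
          (fun u hu u' hu' => lo3 _ (Lo_succ gX _ hu) _ (Lo_succ gY _ hu'))
          (fun u u' h => (G4Q h).2) h
      · have h' : (u, u') = 0 := h
        rw [h']; exact Submodule.zero_mem _
      · exact h)
  refine ⟨g, isHom_iff g1 g2, ?_⟩
  rintro ⟨a, b⟩ ⟨ha, hb⟩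
  have e1 : SQ.Rel φ (a, 0) (g a, 0) := g3 2 a ha.1 ha.2
  have e2 : SQ.Rel φ (0, b) (0, g b) := g3 3 b hb.1 hb.2
  have := e1.add e2
  simpa using this

end G0

theorem finL_good0 : FinL (Good0 (k := k) : Ob.{v} k 1 1 → Prop) := by
  have f1 : FinL (fun X : Ob.{v} k 1 1 => ∃ i : Fin 4, G0.OneP i X) :=
    ⟨Fin 4, inferInstance, fun i X => G0.OneP i X, fun X h => h, fun i X Y h h' => h.linked h'⟩
  have f2 : FinL (fun X : Ob.{v} k 1 1 => ∃ i : Fin 5 × Bool, G0.FreeP i.1 i.2 X) :=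
    ⟨Fin 5 × Bool, inferInstance, fun i X => G0.FreeP i.1 i.2 X, fun X h => h,
      fun i X Y h h' => h.linked h'⟩
  have f3 : FinL (Good0' (k := k) : Ob.{v} k 1 1 → Prop) := by
    refine FinL.stage2 Good0' G0.F Good1 G0.goodF
      (fun X Y hX hY f φ => ∀ u ∈ G0.S X, SQ.Rel (S := G0.S X) (B := G0.B X) (S' := G0.S Y)
        (B' := G0.B Y) φ u ((f.prodMap f) u)) ?_ ?_ finL_good1
    · intro X Y hX hY f g φ ψ h1 h2 h3
      refine SQ.nil (φ := φ) (ψ := ψ) (f := f.prodMap f) (g := g.prodMap g) h1 h2 ?_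
      obtain ⟨n, hn⟩ := h3
      refine ⟨n, ?_⟩
      have key : ∀ n, ∀ u : X.V × X.V, (((g.prodMap g) ∘ₗ (f.prodMap f) : Module.End k (X.V × X.V)) ^ n) u =
          (((g ∘ₗ f : Module.End k X.V) ^ n) u.1, ((g ∘ₗ f : Module.End k X.V) ^ n) u.2) := by
        intro n; induction n with
        | zero => intro u; rfl
        | succ n ih => intro u; rw [pow_succ_apply, ih, pow_succ_apply, pow_succ_apply]; rfl
      refine LinearMap.ext fun u => ?_
      rw [key, hn]; rfl
    · intro X Y hX hY φ h
      exact G0.lift X Y hX hY φ h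
  refine ((f1.or f2).or f3).mono fun X h => ?_
  by_cases h23 : (∃ u ∈ G0.Hi X 2, u ∉ G0.Lo X 2) ∨ ∃ u ∈ G0.Hi X 3, u ∉ G0.Lo X 3
  · right; exact ⟨h, h23⟩
  left
  push Not at h23
  obtain ⟨q2, q3⟩ := h23
  have q0 : G0.Hi X 0 ≤ G0.Lo X 0 := by rw [G0.Hi_zero, G0.Lo_zero]
  have q5 : ∀ i, 5 ≤ i → G0.Hi X i ≤ G0.Lo X i := fun i hi => by
    rw [G0.Hi_big h hi]; exact bot_le
  by_cases h1 : ∃ u ∈ G0.Hi X 1, u ∉ G0.Lo X 1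
  · left; exact ⟨0, h, q0, q2, h1⟩
  by_cases h4 : ∃ u ∈ G0.Hi X 4, u ∉ G0.Lo X 4
  · left; exact ⟨3, h, q3, q5 5 le_rfl, h4⟩
  right
  push Not at h1 h4
  obtain ⟨n, b, hn⟩ := G0.exists_FreeP h (fun i => by
    rcases i with _ | _ | _ | _ | _ | i
    · exact q0
    · exact h1
    · exact q2
    · exact q3
    · exact h4
    · exact q5 _ (by omega))
  exact ⟨(n, b), hn⟩

end SN

namespace SN
universe v

section arrows
variable {Λ : Type} [CommRing Λ]

theorem iso_of_right {X Y : Arrow (ModuleCat.{v} Λ)} (hX : Mono X.hom) (hY : Mono Y.hom)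
    (e : X.right ≃ₗ[Λ] Y.right)
    (h : (LinearMap.range X.hom.hom).map (e : X.right →ₗ[Λ] Y.right) = LinearMap.range Y.hom.hom) :
    Nonempty (X ≅ Y) := by
  have hX' : Function.Injective X.hom.hom := (ModuleCat.mono_iff_injective _).1 hX
  have hY' : Function.Injective Y.hom.hom := (ModuleCat.mono_iff_injective _).1 hY
  let l : X.left ≃ₗ[Λ] Y.left := LinearEquiv.ofInjective X.hom.hom hX' ≪≫ₗ
    (e.submoduleMap _) ≪≫ₗ LinearEquiv.ofEq _ _ h ≪≫ₗ (LinearEquiv.ofInjective Y.hom.hom hY').symm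
  refine ⟨Arrow.isoMk l.toModuleIso e.toModuleIso ?_⟩
  ext u
  have h1 := congrArg Subtype.val ((LinearEquiv.ofInjective Y.hom.hom hY').apply_symm_apply
    (LinearEquiv.ofEq _ _ h (e.submoduleMap _ (LinearEquiv.ofInjective X.hom.hom hX' u))))
  exact h1

/-- The concrete direct sum of two arrows. -/
noncomputable def prodArrow (Y Z : Arrow (ModuleCat.{v} Λ)) : Arrow (ModuleCat.{v} Λ) :=
  Arrow.mk (ModuleCat.ofHom (LinearMap.prodMap Y.hom.hom Z.hom.hom))

theorem biprod_iso_prod (Y Z : Arrow (ModuleCat.{v} Λ)) :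
    Nonempty (arrowBiprod Y Z ≅ prodArrow Y Z) := by
  refine ⟨(Arrow.isoMk (ModuleCat.biprodIsoProd _ _).symm (ModuleCat.biprodIsoProd _ _).symm ?_).symm⟩
  have key : (ModuleCat.biprodIsoProd Y.left Z.left).inv ≫ biprod.map Y.hom Z.hom =
      ModuleCat.ofHom (LinearMap.prodMap Y.hom.hom Z.hom.hom) ≫
        (ModuleCat.biprodIsoProd Y.right Z.right).inv := by
    apply biprod.hom_ext
    · rw [Category.assoc, Category.assoc, biprod.map_fst, ModuleCat.biprodIsoProd_inv_comp_fst,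
        ← Category.assoc, ModuleCat.biprodIsoProd_inv_comp_fst]
      rfl
    · rw [Category.assoc, Category.assoc, biprod.map_snd, ModuleCat.biprodIsoProd_inv_comp_snd,
        ← Category.assoc, ModuleCat.biprodIsoProd_inv_comp_snd]
      rfl
  exact key

theorem mono_prodArrow {Y Z : Arrow (ModuleCat.{v} Λ)} (hY : Mono Y.hom) (hZ : Mono Z.hom) :
    Mono (prodArrow Y Z).hom := by
  have hX' : Function.Injective Y.hom.hom := (ModuleCat.mono_iff_injective _).1 hY
  have hY' : Function.Injective Z.hom.hom := (ModuleCat.mono_iff_injective _).1 hZ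
  exact (ModuleCat.mono_iff_injective _).2 (hX'.prodMap hY')

theorem isZero_of_right {X : Arrow (ModuleCat.{v} Λ)} (hX : Mono X.hom)
    (h : Subsingleton X.right) : IsZero X := by
  have hX' : Function.Injective X.hom.hom := (ModuleCat.mono_iff_injective _).1 hX
  have hl : Subsingleton X.left := hX'.subsingleton
  have h1 := ModuleCat.isZero_of_subsingleton X.left
  have h2 := ModuleCat.isZero_of_subsingleton X.right
  refine ⟨fun Y => ⟨⟨⟨Arrow.homMk (h1.to_ _) (h2.to_ _) (h1.eq_of_src _ _)⟩, fun f => ?_⟩⟩,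
    fun Y => ⟨⟨⟨Arrow.homMk (h1.from_ _) (h2.from_ _) ?_⟩, fun f => ?_⟩⟩⟩
  · ext1
    · exact h1.eq_of_src _ _
    · exact h2.eq_of_src _ _
  · exact h2.eq_of_tgt _ _
  · ext1
    · exact h1.eq_of_tgt _ _
    · exact h2.eq_of_tgt _ _

theorem right_of_isZero {X : Arrow (ModuleCat.{v} Λ)} (h : IsZero X) : Subsingleton X.right := by
  have h1 : 𝟙 X = Arrow.homMk 0 0 (by simp) := h.eq_of_src _ _
  have h2 : 𝟙 X.right = 0 := congrArg (fun f => CommaMorphism.right f) h1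
  refine ⟨fun a b => ?_⟩
  have h3 : ∀ a : X.right, a = 0 := fun a => by
    have := congrArg (fun f => f.hom a) h2
    exact this
  rw [h3 a, h3 b]

variable [IsArtinianRing Λ]

/-- Fitting's lemma for indecomposable objects. -/
theorem fitting (X : Arrow (ModuleCat.{v} Λ)) (hX : SModObj' Λ X)
    (hi : IndecArrowIn (SModObj' Λ) X) (f : Module.End Λ X.right)
    (hf : ∀ u ∈ LinearMap.range X.hom.hom, f u ∈ LinearMap.range X.hom.hom) :
    IsNilpotent f ∨ Function.Bijective f := by
  obtain ⟨_, _, hm⟩ := hX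
  set U := LinearMap.range X.hom.hom with hU
  let fU : Module.End Λ U := f.restrict hf
  have e1 := LinearMap.eventually_isCompl_ker_pow_range_pow f
  have e2 := LinearMap.eventually_isCompl_ker_pow_range_pow fU
  obtain ⟨n, ⟨h1, h2⟩, hn⟩ := ((e1.and e2).and (Filter.eventually_gt_atTop 0)).exists
  set K := LinearMap.ker (f ^ n)
  set R := LinearMap.range (f ^ n)
  have hpow : ∀ u : U, (((fU ^ n) u : U) : X.right) = (f ^ n) u := by
    intro u
    clear h1 h2 hn K R
    induction n with
    | zero => rfl
    | succ n ih => rw [pow_succ', pow_succ', Module.End.mul_apply, Module.End.mul_apply, ← ih]; rfl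
  let Y : Arrow (ModuleCat.{v} Λ) := Arrow.mk (ModuleCat.ofHom (U.comap K.subtype).subtype)
  let Z : Arrow (ModuleCat.{v} Λ) := Arrow.mk (ModuleCat.ofHom (U.comap R.subtype).subtype)
  have mY : Mono Y.hom := (ModuleCat.mono_iff_injective _).2 (Submodule.subtype_injective _)
  have mZ : Mono Z.hom := (ModuleCat.mono_iff_injective _).2 (Submodule.subtype_injective _)
  have hY : SModObj' Λ Y := ⟨inferInstanceAs (Module.Finite Λ (U.comap K.subtype)),
    inferInstanceAs (Module.Finite Λ K), mY⟩
  have hZ : SModObj' Λ Z := ⟨inferInstanceAs (Module.Finite Λ (U.comap R.subtype)),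
    inferInstanceAs (Module.Finite Λ R), mZ⟩
  have iso : Nonempty (prodArrow Y Z ≅ X) := by
    refine iso_of_right (mono_prodArrow mY mZ) hm (Submodule.prodEquivOfIsCompl K R h1) ?_
    apply le_antisymm
    · rintro _ ⟨_, ⟨⟨a, b⟩, rfl⟩, rfl⟩
      exact U.add_mem a.2 b.2
    · intro u hu
      obtain ⟨a, ha, b, hb, hab⟩ := Submodule.mem_sup.1
        (h2.sup_eq_top ▸ Submodule.mem_top :
          (⟨u, hu⟩ : U) ∈ LinearMap.ker (fU ^ n) ⊔ LinearMap.range (fU ^ n))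
      have haK : (a : X.right) ∈ K := by
        have h3 := hpow a
        rw [LinearMap.mem_ker.1 ha] at h3
        exact h3.symm
      have hbR : (b : X.right) ∈ R := by
        obtain ⟨c, rfl⟩ := hb
        exact ⟨c, (hpow c).symm⟩
      refine ⟨(⟨a, haK⟩, ⟨b, hbR⟩), ⟨(⟨⟨a, haK⟩, a.2⟩, ⟨⟨b, hbR⟩, b.2⟩), rfl⟩, ?_⟩
      exact congrArg Subtype.val hab
  obtain ⟨iso⟩ := iso
  obtain ⟨iso2⟩ := biprod_iso_prod Y Z
  rcases hi.2 Y Z hY hZ ⟨iso.symm ≪≫ iso2.symm⟩ with h0 | h0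
  · right
    have h3 : Subsingleton K := right_of_isZero h0
    have h4 : K = ⊥ := (Submodule.subsingleton_iff_eq_bot).1 h3
    have h5 : R = ⊤ := by
      have := h1.sup_eq_top
      rwa [h4, bot_sup_eq] at this
    obtain ⟨m, rfl⟩ := Nat.exists_eq_succ_of_ne_zero hn.ne'
    constructor
    · rw [← LinearMap.ker_eq_bot, eq_bot_iff, ← h4]
      intro u hu
      show (f ^ (m + 1)) u = 0
      rw [pow_succ, Module.End.mul_apply, LinearMap.mem_ker.1 hu, map_zero]
    · rw [← LinearMap.range_eq_top, eq_top_iff, ← h5]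
      rintro _ ⟨u, rfl⟩
      exact ⟨(f ^ m) u, by rw [← Module.End.mul_apply, ← pow_succ']⟩
  · left
    have h3 : Subsingleton R := right_of_isZero h0
    have h4 : R = ⊥ := (Submodule.subsingleton_iff_eq_bot).1 h3
    exact ⟨n, LinearMap.range_eq_bot.1 h4⟩

end arrows

section ob
variable {k : Type} [Field k] {Λ : Type} [CommRing Λ] [Algebra k Λ] [Module.Finite k Λ] (x : Λ)

/-- The vector space with operator and subspace attached to a monomorphism. -/
noncomputable def ob (X : Arrow (ModuleCat.{v} Λ)) (hX : SModObj' Λ X) : Ob.{v} k 1 1 :=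
  letI : Module k X.right := Module.compHom X.right (algebraMap k Λ)
  haveI : IsScalarTower k Λ X.right := ⟨fun a b c => by
    rw [Algebra.smul_def, mul_smul]; rfl⟩
  haveI : Module.Finite Λ X.right := hX.2.1
  haveI : FiniteDimensional k X.right := Module.Finite.trans Λ X.right
  { V := X.right
    op := fun _ => (LinearMap.lsmul Λ X.right x).restrictScalars k
    sub := fun _ => (LinearMap.range X.hom.hom).restrictScalars k }



/-- homomorphisms give linear maps -/
theorem ob_lin (hx : Algebra.adjoin k {x} = ⊤) (X Y : Arrow (ModuleCat.{v} Λ)) (hX : SModObj' Λ X) (hY : SModObj' Λ Y)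
    (f : (ob (k := k) x X hX).V →ₗ[k] (ob (k := k) x Y hY).V)
    (hf : IsHom (ob (k := k) x X hX) (ob (k := k) x Y hY) f) :
    ∃ g : X.right →ₗ[Λ] Y.right, (∀ u, g u = f u) ∧
      ∀ u ∈ LinearMap.range X.hom.hom, g u ∈ LinearMap.range Y.hom.hom := by
  obtain ⟨F, hF⟩ : ∃ F : X.right → Y.right, ∀ u, F u = f u := ⟨f, fun _ => rfl⟩
  have Fadd : ∀ u w, F (u + w) = F u + F w := fun u w => by
    rw [hF, hF, hF]; exact f.map_add u w
  have Fx : ∀ u, F (x • u) = x • F u := fun u => by rw [hF, hF]; exact hf.1 0 u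
  have Fk : ∀ (c : k) u, F (algebraMap k Λ c • u) = algebraMap k Λ c • F u := fun c u => by
    rw [hF, hF]; exact f.map_smul c u
  have FΛ : ∀ (r : Λ) u, F (r • u) = r • F u := by
    intro r
    have hr : r ∈ Algebra.adjoin k {x} := hx ▸ Algebra.mem_top
    induction hr using Algebra.adjoin_induction with
    | mem y hy => rw [Set.mem_singleton_iff.1 hy]; exact Fx
    | algebraMap r => exact Fk r
    | add a b _ _ ha hb => intro u; rw [add_smul, add_smul, Fadd, ha, hb]
    | mul a b _ _ ha hb => intro u; rw [mul_smul, mul_smul, ha, hb]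
  refine ⟨{ toFun := F, map_add' := Fadd, map_smul' := FΛ }, hF, fun u hu => ?_⟩
  show F u ∈ _
  rw [hF]
  exact hf.2 0 u hu

theorem iso_of_linked (hx : Algebra.adjoin k {x} = ⊤) (X Y : Arrow (ModuleCat.{v} Λ)) (hX : SModObj' Λ X) (hY : SModObj' Λ Y)
    (iX : IndecArrowIn (SModObj' Λ) X) (iY : IndecArrowIn (SModObj' Λ) Y)
    (h : Linked (ob (k := k) x X hX) (ob (k := k) x Y hY)) : Nonempty (X ≅ Y) := by
  have : IsArtinianRing Λ := IsArtinianRing.of_finite k Λ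
  obtain ⟨f, g, hf, hg, hn⟩ := h
  obtain ⟨f', ef, hf'⟩ := ob_lin x hx X Y hX hY f hf
  obtain ⟨g', eg, hg'⟩ := ob_lin x hx Y X hY hX g hg
  have n1 : ¬ IsNilpotent (g' ∘ₗ f' : Module.End Λ X.right) := by
    rintro ⟨n, h⟩
    apply hn
    refine ⟨n, LinearMap.ext fun u => ?_⟩
    have : ∀ n (u : X.right), ((g' ∘ₗ f' : Module.End Λ X.right) ^ n) u =
        ((g ∘ₗ f : Module.End k (ob (k := k) x X hX).V) ^ n) u := by
      intro n
      induction n with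
      | zero => intro u; rfl
      | succ n ih =>
        intro u
        have e1 := pow_succ_apply (g ∘ₗ f : Module.End k (ob (k := k) x X hX).V) n u
        have e2 := congrArg (fun h : Module.End Λ X.right => h u)
          (pow_succ' (g' ∘ₗ f' : Module.End Λ X.right) n)
        have e3 : g' (f' (((g' ∘ₗ f' : Module.End Λ X.right) ^ n) u)) =
          g (f (((g ∘ₗ f : Module.End k (ob (k := k) x X hX).V) ^ n) u)) := by
          rw [ih]; exact (eg _).trans (congrArg g (ef _))
        exact e2.trans (e3.trans e1.symm)
    refine (this n u).symm.trans ?_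
    rw [h]; rfl
  have n2 : ¬ IsNilpotent (f' ∘ₗ g' : Module.End Λ Y.right) := by
    rintro ⟨n, h⟩
    apply n1
    refine ⟨n + 1, ?_⟩
    have : ∀ n, (g' ∘ₗ f' : Module.End Λ X.right) ^ (n + 1) =
        g' ∘ₗ (((f' ∘ₗ g' : Module.End Λ Y.right) ^ n : Module.End Λ Y.right) :
          Y.right →ₗ[Λ] Y.right) ∘ₗ f' := by
      intro n
      induction n with
      | zero => rw [zero_add, pow_one]; rfl
      | succ n ih =>
        rw [pow_succ', ih, pow_succ']; rfl
    rw [this, h, LinearMap.zero_comp, LinearMap.comp_zero]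
  have b1 := (fitting X hX iX (g' ∘ₗ f') fun u hu => hg' _ (hf' _ hu)).resolve_left n1
  have b2 := (fitting Y hY iY (f' ∘ₗ g') fun u hu => hf' _ (hg' _ hu)).resolve_left n2
  have bf : Function.Bijective f' := by
    rw [LinearMap.coe_comp] at b1 b2
    exact ⟨b1.1.of_comp, b2.2.of_comp⟩
  refine iso_of_right hX.2.2 hY.2.2 (LinearEquiv.ofBijective f' bf) ?_
  apply le_antisymm
  · rintro _ ⟨u, hu, rfl⟩; exact hf' u hu
  · intro u hu
    -- `f' ∘ g'` restricts to an injective, hence surjective, endomorphism of `U`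
    have : Module.Finite Λ Y.right := hY.2.1
    let h : Module.End Λ (LinearMap.range Y.hom.hom) :=
      (f' ∘ₗ g').restrict fun u hu => hf' _ (hg' _ hu)
    have hinj : Function.Injective h := fun a b hab =>
      Subtype.ext (b2.1 (congrArg Subtype.val hab))
    obtain ⟨⟨w, hw⟩, hw'⟩ := (IsArtinian.surjective_of_injective_endomorphism h hinj) ⟨u, hu⟩
    exact ⟨g' w, hg' w hw, congrArg Subtype.val hw'⟩

theorem frt_of_le (hx : Algebra.adjoin k {x} = ⊤) (h5 : x ^ 5 = 0) :
    FRTArrow (SModObj'.{v} Λ) := by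
  obtain ⟨τ, _, P, h1, h2⟩ := finL_good0.{v} (k := k)
  classical
  let Q : τ → Arrow (ModuleCat.{v} Λ) → Prop := fun t X =>
    ∃ hX : SModObj' Λ X, IndecArrowIn (SModObj' Λ) X ∧ P t (ob (k := k) x X hX)
  let r : {t // ∃ X, Q t X} → Arrow (ModuleCat.{v} Λ) := fun t => t.2.choose
  refine ⟨Set.range r, Set.finite_range r, fun X hX iX => ?_⟩
  have hg : Good0 (ob (k := k) x X hX) := by
    refine ⟨?_, ?_, ?_⟩
    · refine LinearMap.ext fun u => ?_
      have : ∀ n (u : X.right), (((ob (k := k) x X hX).op 0) ^ n) u = (x ^ n) • u := by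
        intro n
        induction n with
        | zero => intro u; rw [pow_zero, pow_zero, one_smul]; rfl
        | succ n ih =>
          intro u
          have e1 := pow_succ_apply ((ob (k := k) x X hX).op 0) n u
          have e2 : x • x ^ n • u = x ^ (n + 1) • u := by rw [pow_succ', mul_smul]
          exact e1.trans ((congrArg (fun w : X.right => x • w) (ih u)).trans e2)
      have e3 : ∀ u : X.right, x ^ 5 • u = 0 := fun u => by rw [h5, zero_smul]
      exact (this 5 u).trans (e3 u)
    · intro u hu
      exact Submodule.smul_mem (LinearMap.range X.hom.hom) x hu
    · by_contra hc
      push Not at hc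
      apply iX.1
      apply isZero_of_right hX.2.2
      exact ⟨fun a b => (hc a).trans (hc b).symm⟩
  obtain ⟨t, ht⟩ := h1 _ hg
  have hq : ∃ X, Q t X := ⟨X, hX, iX, ht⟩
  obtain ⟨hY, iY, pY⟩ := hq.choose_spec
  exact ⟨r ⟨t, hq⟩, ⟨_, rfl⟩, iso_of_linked x hx X _ hX hY iX iY (h2 t _ _ ht pY)⟩

end ob
end SN

namespace SN
universe v

section classes
variable {Λ : Type} [CommRing Λ]

theorem length_split {X Y Z : Arrow (ModuleCat.{v} Λ)} (e : X ≅ arrowBiprod Y Z) :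
    Module.length Λ X.right = Module.length Λ Y.right + Module.length Λ Z.right := by
  obtain ⟨e2⟩ := biprod_iso_prod Y Z
  have e3 : X.right ≃ₗ[Λ] (Y.right × Z.right) :=
    (Arrow.rightFunc.mapIso (e ≪≫ e2)).toLinearEquiv
  rw [e3.length_eq, Module.length_prod]

theorem biprod_congr {Y Z Y' Z' : Arrow (ModuleCat.{v} Λ)} (e : Y ≅ Y') (f : Z ≅ Z') :
    Nonempty (arrowBiprod Y Z ≅ arrowBiprod Y' Z') := by
  refine ⟨Arrow.isoMk (biprod.mapIso (Arrow.leftFunc.mapIso e) (Arrow.leftFunc.mapIso f))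
    (biprod.mapIso (Arrow.rightFunc.mapIso e) (Arrow.rightFunc.mapIso f)) ?_⟩
  show biprod.map e.hom.left f.hom.left ≫ biprod.map Y'.hom Z'.hom =
    biprod.map Y.hom Z.hom ≫ biprod.map e.hom.right f.hom.right
  apply biprod.hom_ext
  · simp
  · simp

/-- In the finite case there are finitely many classes of bounded length. -/
theorem finite_classes (h : FRTArrow (SModObj'.{v} Λ)) (n : ℕ) :
    ∃ s : Set (Arrow (ModuleCat.{v} Λ)), s.Finite ∧ ∀ X, SModObj' Λ X →
      Module.length Λ X.right ≤ n → ∃ Y ∈ s, Nonempty (X ≅ Y) := by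
  obtain ⟨s, hs, hs'⟩ := h
  let Z0 : Arrow (ModuleCat.{v} Λ) := Arrow.mk (𝟙 (ModuleCat.of Λ PUnit))
  have z0 : IsZero Z0 := isZero_of_right (inferInstanceAs (Mono (𝟙 _)))
    (inferInstanceAs (Subsingleton PUnit))
  induction n with
  | zero =>
    refine ⟨{Z0}, Set.finite_singleton _, fun X hX hl => ⟨Z0, rfl, ?_⟩⟩
    have h1 : Module.length Λ X.right = 0 := by simpa using hl
    exact ⟨(isZero_of_right hX.2.2 (Module.length_eq_zero_iff.1 h1)).iso z0⟩
  | succ n ih =>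
    obtain ⟨S, hS, hS'⟩ := ih
    refine ⟨s ∪ {Z0} ∪ Set.image2 arrowBiprod S S,
      (hs.union (Set.finite_singleton _)).union (hS.image2 _ hS), fun X hX hl => ?_⟩
    by_cases hz : IsZero X
    · exact ⟨Z0, Or.inl (Or.inr rfl), ⟨hz.iso z0⟩⟩
    by_cases hi : IndecArrowIn (SModObj' Λ) X
    · obtain ⟨Y, hY, e⟩ := hs' X hX hi
      exact ⟨Y, Or.inl (Or.inl hY), e⟩
    have h1 : ∃ Y Z, SModObj' Λ Y ∧ SModObj' Λ Z ∧ Nonempty (X ≅ arrowBiprod Y Z) ∧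
        ¬ IsZero Y ∧ ¬ IsZero Z := by
      by_contra hc
      apply hi
      refine ⟨hz, fun Y Z hY hZ e => ?_⟩
      by_contra hd
      push Not at hd
      exact hc ⟨Y, Z, hY, hZ, e, hd⟩
    obtain ⟨Y, Z, hY, hZ, ⟨e⟩, nY, nZ⟩ := h1
    have hlen := length_split e
    have hy : Module.length Λ Y.right ≠ 0 := fun h0 =>
      nY (isZero_of_right hY.2.2 (Module.length_eq_zero_iff.1 h0))
    have hz : Module.length Λ Z.right ≠ 0 := fun h0 =>
      nZ (isZero_of_right hZ.2.2 (Module.length_eq_zero_iff.1 h0))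
    rw [hlen] at hl
    have hb : Module.length Λ Y.right ≤ n ∧ Module.length Λ Z.right ≤ n := by
      generalize Module.length Λ Y.right = p at *
      generalize Module.length Λ Z.right = q at *
      have hp : p ≠ ⊤ := by rintro rfl; simp at hl
      have hq : q ≠ ⊤ := by rintro rfl; simp at hl
      lift p to ℕ using hp
      lift q to ℕ using hq
      norm_cast at *
      omega
    obtain ⟨Y', hY', ⟨eY⟩⟩ := hS' Y hY hb.1
    obtain ⟨Z', hZ', ⟨eZ⟩⟩ := hS' Z hZ hb.2
    obtain ⟨e'⟩ := biprod_congr eY eZ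
    exact ⟨_, Or.inr ⟨Y', hY', Z', hZ', rfl⟩, ⟨e ≪≫ e'⟩⟩

end classes

section family
variable {k : Type} [Field k]

/-- The shift operator on `k[T]/T⁶ ⊕ k[T]/T⁴ ⊕ k[T]/T²`. -/
def shiftT : Module.End k (Fin 12 → k) where
  toFun u := ![0, u 0, u 1, u 2, u 3, u 4, 0, u 6, u 7, u 8, 0, u 10]
  map_add' u w := by ext i; fin_cases i <;> simp
  map_smul' c u := by ext i; fin_cases i <;> simp

theorem shiftT_apply (u : Fin 12 → k) :
    shiftT u = ![0, u 0, u 1, u 2, u 3, u 4, 0, u 6, u 7, u 8, 0, u 10] := rfl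

theorem shiftT_pow : (shiftT : Module.End k (Fin 12 → k)) ^ 6 = 0 := by
  refine LinearMap.ext fun u => ?_
  simp only [pow_succ, pow_zero, one_mul, Module.End.mul_apply, shiftT_apply]
  ext i; fin_cases i <;> simp

/-- The subspaces of the family. -/
def famU (c : k) : Submodule k (Fin 12 → k) where
  carrier := {u | u 0 = 0 ∧ u 1 = 0 ∧ u 6 = 0 ∧ u 2 = u 10 ∧ u 7 = u 10 ∧
    u 11 = u 3 + c * (u 8 - u 3)}
  zero_mem' := by simp
  add_mem' := by
    rintro u w ⟨h1, h2, h3, h4, h5, h6⟩ ⟨g1, g2, g3, g4, g5, g6⟩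
    refine ⟨?_, ?_, ?_, ?_, ?_, ?_⟩ <;> simp only [Pi.add_apply, *] <;> ring
  smul_mem' := by
    rintro r u ⟨h1, h2, h3, h4, h5, h6⟩
    refine ⟨?_, ?_, ?_, ?_, ?_, ?_⟩ <;> simp only [Pi.smul_apply, smul_eq_mul, *] <;> ring

theorem mem_famU {c : k} {u : Fin 12 → k} : u ∈ famU c ↔ (u 0 = 0 ∧ u 1 = 0 ∧ u 6 = 0 ∧
    u 2 = u 10 ∧ u 7 = u 10 ∧ u 11 = u 3 + c * (u 8 - u 3)) := Iff.rfl

theorem shiftT_famU (c : k) : ∀ u ∈ famU c, shiftT u ∈ famU c := by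
  rintro u ⟨h1, h2, h3, h4, h5, h6⟩
  rw [mem_famU, shiftT_apply]
  refine ⟨rfl, h1, rfl, h2, h3, ?_⟩
  show u 10 = u 2 + c * (u 7 - u 2)
  rw [h4, h5]; ring

theorem famU_rigid (c d : k) (g : (Fin 12 → k) →ₗ[k] (Fin 12 → k)) (hg : Function.Injective g)
    (hT : ∀ u, g (shiftT u) = shiftT (g u)) (hU : ∀ u ∈ famU c, g u ∈ famU d) : c = d := by
  let E : Fin 12 → (Fin 12 → k) := fun i => Pi.single i 1
  have s : ∀ i j : Fin 12, (E i) j = if j = i then 1 else 0 := fun i j => Pi.single_apply i 1 j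
  have sh : ∀ (i j : Fin 12), (∀ l, ![0, E i 0, E i 1, E i 2, E i 3, E i 4, 0, E i 6, E i 7, E i 8,
      0, E i 10] l = E j l) → g (E j) = shiftT (g (E i)) := by
    intro i j h
    rw [← hT]; congr 1; ext l; exact (h l).symm
  have t1 : g (E 1) = shiftT (g (E 0)) := sh _ _ (by intro l; fin_cases l <;> simp [s])
  have t2 : g (E 2) = shiftT (g (E 1)) := sh _ _ (by intro l; fin_cases l <;> simp [s])
  have t3 : g (E 3) = shiftT (g (E 2)) := sh _ _ (by intro l; fin_cases l <;> simp [s])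
  have t4 : g (E 4) = shiftT (g (E 3)) := sh _ _ (by intro l; fin_cases l <;> simp [s])
  have t5 : g (E 5) = shiftT (g (E 4)) := sh _ _ (by intro l; fin_cases l <;> simp [s])
  have t7 : g (E 7) = shiftT (g (E 6)) := sh _ _ (by intro l; fin_cases l <;> simp [s])
  have t8 : g (E 8) = shiftT (g (E 7)) := sh _ _ (by intro l; fin_cases l <;> simp [s])
  have t9 : g (E 9) = shiftT (g (E 8)) := sh _ _ (by intro l; fin_cases l <;> simp [s])
  have t11 : g (E 11) = shiftT (g (E 10)) := sh _ _ (by intro l; fin_cases l <;> simp [s])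
  have z9 : shiftT (g (E 9)) = 0 := by
    rw [← hT, ← map_zero g]; congr 1; rw [shiftT_apply]
    ext l; fin_cases l <;> simp [s]
  have z11 : shiftT (g (E 11)) = 0 := by
    rw [← hT, ← map_zero g]; congr 1; rw [shiftT_apply]
    ext l; fin_cases l <;> simp [s]
  have u1 : g (E 2 + E 7 + E 10) ∈ famU d := hU _ (by
    rw [mem_famU]; simp [s])
  have u2 : g (E 8 + c • E 11) ∈ famU d := hU _ (by
    rw [mem_famU]; simp [s])
  obtain ⟨a, ha⟩ : ∃ a, g (E 6) = a := ⟨_, rfl⟩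
  obtain ⟨b, hb⟩ : ∃ b, g (E 10) = b := ⟨_, rfl⟩
  obtain ⟨x, hx⟩ : ∃ x, g (E 0) = x := ⟨_, rfl⟩
  rw [hx] at t1
  rw [t1] at t2
  rw [t2] at t3
  rw [t3] at t4
  rw [t4] at t5
  rw [ha] at t7
  rw [t7] at t8
  rw [t8] at t9
  rw [hb] at t11
  rw [t9] at z9
  rw [t11] at z11
  rw [map_add, map_add, t2, t7, hb, mem_famU] at u1
  rw [map_add, map_smul, t8, t11, mem_famU] at u2
  simp only [shiftT_apply] at t5 t9 z9 z11 u1 u2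
  have a0 : a 0 = 0 := by simpa using congrFun z9 4
  have a1 : a 1 = 0 := by simpa using congrFun z9 5
  have b2 : b 2 = 0 := by simpa using congrFun z11 4
  have b7 : b 7 = 0 := by simpa using congrFun z11 9
  have e1 : a 6 = b 10 := by simpa [b7] using u1.2.2.2.2.1
  have e2 : c * b 10 = d * a 6 := by simpa [a0, a1, b2, b7] using u2.2.2.2.2.2
  have hα : a 6 ≠ 0 := by
    intro h0
    have k5 : g (E 5) = x 0 • E 5 := by
      rw [t5]; ext l; fin_cases l <;> simp [s]
    have k9 : g (E 9) = a 2 • E 5 := by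
      rw [t9]; ext l; fin_cases l <;> simp [s, a0, a1, h0]
    have h3 : x 0 • E 9 = a 2 • E 5 := hg (by
      rw [map_smul, map_smul, k5, k9, smul_comm])
    have h4 : x 0 = 0 := by simpa [s] using congrFun h3 9
    have h5 : E 5 = 0 := hg (by rw [k5, h4, zero_smul, map_zero])
    simpa [s] using congrFun h5 5
  rw [← e1] at e2
  exact mul_right_cancel₀ hα e2

open Polynomial in
/-- The truncated polynomial ring. -/
abbrev Lam (k : Type) [Field k] (t : ℕ) : Type := k[X] ⧸ (Ideal.span {X ^ t} : Ideal k[X])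

/-- The copy of `Fin 12 → k` in a given universe. -/
abbrev W (k : Type) : Type v := ULift.{v} (Fin 12 → k)

/-- The operator on `W`. -/
noncomputable def opW : Module.End k (W.{v} k) :=
  (ULift.moduleEquiv.symm : (Fin 12 → k) ≃ₗ[k] W.{v} k).toLinearMap ∘ₗ shiftT ∘ₗ
    (ULift.moduleEquiv : W.{v} k ≃ₗ[k] (Fin 12 → k)).toLinearMap

theorem opW_pow (n : ℕ) (u : W.{v} k) : (opW ^ n) u = ULift.up ((shiftT ^ n) u.down) := by
  induction n with
  | zero => rfl
  | succ n ih => rw [pow_succ_apply, ih, pow_succ_apply]; rfl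

theorem opW_zero {t : ℕ} (ht : 6 ≤ t) : (opW : Module.End k (W.{v} k)) ^ t = 0 := by
  refine LinearMap.ext fun u => ?_
  rw [opW_pow, pow_eq_zero_of_le ht shiftT_pow]; rfl

/-- The action. -/
noncomputable def actW {t : ℕ} (ht : 6 ≤ t) : Lam k t →+* Module.End k (W.{v} k) :=
  Ideal.Quotient.lift _ (Polynomial.aeval (R := k) (opW : Module.End k (W.{v} k))).toRingHom (by
    intro a ha
    obtain ⟨b, rfl⟩ := Ideal.mem_span_singleton.1 ha
    show Polynomial.aeval _ _ = _
    rw [map_mul, map_pow, Polynomial.aeval_X, opW_zero ht, zero_mul])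

/-- The module structure. -/
noncomputable abbrev modW {t : ℕ} (ht : 6 ≤ t) : Module (Lam k t) (W.{v} k) :=
  Module.compHom (W.{v} k) (actW ht)

theorem actW_X {t : ℕ} (ht : 6 ≤ t) :
    actW.{v} ht (Ideal.Quotient.mk _ Polynomial.X : Lam k t) = opW := by
  show Polynomial.aeval _ _ = _
  rw [Polynomial.aeval_X]

theorem actW_C {t : ℕ} (ht : 6 ≤ t) (c : k) (u : W.{v} k) :
    actW.{v} ht (Ideal.Quotient.mk _ (Polynomial.C c) : Lam k t) u = c • u := by
  show Polynomial.aeval (R := k) (opW : Module.End k (W.{v} k)) (Polynomial.C c) u = _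
  rw [Polynomial.aeval_C]; rfl

/-- The submodules. -/
noncomputable def subW {t : ℕ} (ht : 6 ≤ t) (c : k) :
    letI := modW.{v} (k := k) ht; Submodule (Lam k t) (W.{v} k) :=
  letI := modW.{v} (k := k) ht
  { carrier := {u | u.down ∈ famU c}
    zero_mem' := (famU c).zero_mem
    add_mem' := fun h h' => (famU c).add_mem h h'
    smul_mem' := by
      intro r u hu
      obtain ⟨p, rfl⟩ := Ideal.Quotient.mk_surjective r
      show (Polynomial.aeval (R := k) (opW : Module.End k (W.{v} k)) p u).down ∈ famU c
      induction p using Polynomial.induction_on' with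
      | add p q hp hq =>
        rw [map_add]; exact (famU c).add_mem hp hq
      | monomial n r =>
        rw [Polynomial.aeval_monomial]
        show (r • (opW ^ n) u).down ∈ famU c
        refine (famU c).smul_mem r ?_
        rw [opW_pow]
        induction n with
        | zero => exact hu
        | succ n ih => rw [pow_succ_apply]; exact shiftT_famU c _ ih }

/-- The family of monomorphisms. -/
noncomputable def fam {t : ℕ} (ht : 6 ≤ t) (c : k) : Arrow (ModuleCat.{v} (Lam k t)) :=
  letI := modW.{v} (k := k) ht
  Arrow.mk (ModuleCat.ofHom (subW.{v} ht c).subtype)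

theorem finite_Lam (t : ℕ) : Module.Finite k (Lam k t) :=
  (Polynomial.monic_X_pow t).finite_quotient

theorem artinian_Lam (t : ℕ) : IsArtinianRing (Lam k t) :=
  have := finite_Lam (k := k) t
  IsArtinianRing.of_finite k (Lam k t)

theorem finite_W {t : ℕ} (ht : 6 ≤ t) :
    letI := modW.{v} (k := k) ht; Module.Finite (Lam k t) (W.{v} k) := by
  letI := modW.{v} (k := k) ht
  have : IsScalarTower k (Lam k t) (W.{v} k) := ⟨fun a b c => by
    show actW ht (a • b) c = a • actW ht b c
    have h1 : a • b = (Ideal.Quotient.mk _ (Polynomial.C a) : Lam k t) * b := by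
      obtain ⟨p, rfl⟩ := Ideal.Quotient.mk_surjective b
      rw [← map_mul, ← Polynomial.smul_eq_C_mul]; rfl
    rw [h1, map_mul, Module.End.mul_apply, actW_C]⟩
  exact Module.Finite.of_restrictScalars_finite k (Lam k t) (W.{v} k)

theorem fam_obj {t : ℕ} (ht : 6 ≤ t) (c : k) : SModObj' (Lam k t) (fam.{v} ht c) := by
  letI := modW.{v} (k := k) ht
  have := artinian_Lam (k := k) t
  have hf : Module.Finite (Lam k t) (W.{v} k) := finite_W ht
  exact ⟨inferInstanceAs (Module.Finite (Lam k t) (subW.{v} ht c)), hf,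
    (ModuleCat.mono_iff_injective _).2 (Submodule.subtype_injective _)⟩

theorem fam_inj {t : ℕ} (ht : 6 ≤ t) (c d : k) (e : fam.{v} ht c ≅ fam.{v} ht d) : c = d := by
  letI := modW.{v} (k := k) ht
  let r : W.{v} k ≃ₗ[Lam k t] W.{v} k := (Arrow.rightFunc.mapIso e).toLinearEquiv
  have hr : ∀ u : W.{v} k, u.down ∈ famU c → (r u).down ∈ famU d := by
    intro u hu
    let u' : subW.{v} ht c := ⟨u, hu⟩
    have h1 := congrArg (fun f => f.hom u') e.hom.w
    let w : subW.{v} ht d := e.hom.left.hom u'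
    have h2 : (w : W.{v} k) = r u := h1
    rw [← h2]; exact w.2
  let g : (Fin 12 → k) →ₗ[k] (Fin 12 → k) :=
    { toFun := fun u => (r ⟨u⟩).down
      map_add' := fun u w => congrArg ULift.down (r.map_add ⟨u⟩ ⟨w⟩)
      map_smul' := fun c u => by
        have h1 := r.map_smul (Ideal.Quotient.mk _ (Polynomial.C c) : Lam k t) ⟨u⟩
        have h2 := actW_C.{v} ht c ⟨u⟩
        have h3 := actW_C.{v} ht c (r ⟨u⟩)
        exact congrArg ULift.down ((congrArg r h2).symm.trans (h1.trans h3)) }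
  refine famU_rigid c d g ?_ ?_ ?_
  · intro u w h
    exact congrArg ULift.down (r.injective (ULift.ext _ _ h))
  · intro u
    have h1 := r.map_smul (Ideal.Quotient.mk _ Polynomial.X : Lam k t) ⟨u⟩
    have h2 := congrArg (fun f : Module.End k (W.{v} k) => f ⟨u⟩) (actW_X.{v} (k := k) ht)
    have h3 := congrArg (fun f : Module.End k (W.{v} k) => f (r ⟨u⟩)) (actW_X.{v} (k := k) ht)
    exact congrArg ULift.down ((congrArg r h2).symm.trans (h1.trans h3))
  · intro u hu
    exact hr ⟨u⟩ hu

theorem not_frt [Infinite k] {t : ℕ} (ht : 6 ≤ t) : ¬ FRTArrow (SModObj'.{v} (Lam k t)) := by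
  intro h
  letI := modW.{v} (k := k) ht
  have := artinian_Lam (k := k) t
  have hf : Module.Finite (Lam k t) (W.{v} k) := finite_W ht
  obtain ⟨n, hn⟩ := ENat.ne_top_iff_exists.1
    (Module.length_ne_top : Module.length (Lam k t) (W.{v} k) ≠ ⊤)
  obtain ⟨s, hs, hs'⟩ := finite_classes h n
  have h1 : ∀ c : k, ∃ Y ∈ s, Nonempty (fam.{v} ht c ≅ Y) := fun c =>
    hs' _ (fam_obj ht c) (le_of_eq hn.symm)
  choose F hF hF' using h1
  obtain ⟨c, -, d, -, hcd, he⟩ := Set.infinite_univ.exists_ne_map_eq_of_mapsTo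
    (f := F) (t := s) (fun c _ => hF c) hs
  obtain ⟨e1⟩ := hF' c
  obtain ⟨e2⟩ := hF' d
  exact hcd (fam_inj ht c d (e1 ≪≫ eqToIso he ≪≫ e2.symm))

theorem adjoin_Lam (t : ℕ) :
    Algebra.adjoin k {(Ideal.Quotient.mk _ Polynomial.X : Lam k t)} = ⊤ := by
  rw [eq_top_iff]
  intro r _
  obtain ⟨p, rfl⟩ := Ideal.Quotient.mk_surjective r
  have h : (Ideal.Quotient.mkₐ k (Ideal.span {Polynomial.X ^ t} : Ideal (Polynomial k))) p =
      Polynomial.aeval (Ideal.Quotient.mk _ Polynomial.X : Lam k t) p := by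
    conv_lhs => rw [← Polynomial.aeval_X_left_apply p]
    rw [← Polynomial.aeval_algHom_apply]; rfl
  have h' : Ideal.Quotient.mk _ p = Polynomial.aeval (Ideal.Quotient.mk _ Polynomial.X : Lam k t) p := h
  rw [h']
  exact Polynomial.aeval_mem_adjoin_singleton k _

end family
end SN

/-- Let `k` be an algebraically closed field of characteristic
different from `2` and `t ≥ 2`.  Then the monomorphism category `S(mod k[X]/(Xᵗ))` is of
finite representation type if and only if `t ≤ 5`. -/
theorem stmt19 (k : Type) [Field k] [IsAlgClosed k] (h2 : (2 : k) ≠ 0)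
    (t : ℕ) (ht : 2 ≤ t) :
    FRTArrow (SModObj'
      (Polynomial k ⧸ (Ideal.span {Polynomial.X ^ t} : Ideal (Polynomial k)))) ↔
      t ≤ 5 := by
  constructor
  · intro h
    by_contra hc
    exact SN.not_frt (by omega) h
  · intro h5
    have := SN.finite_Lam (k := k) t
    refine SN.frt_of_le (k := k) (Ideal.Quotient.mk _ Polynomial.X : SN.Lam k t) (SN.adjoin_Lam t) ?_
    rw [← map_pow, Ideal.Quotient.eq_zero_iff_mem]
    exact Ideal.mem_span_singleton.2 (pow_dvd_pow _ h5)
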